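/- arXiv:1505.05255 — 2 statements merged into one kernel-verified Lean document; each statement's English description precedes it below -/
import Mathlib

section
/- Let M ⊂ ℂ² be the quadric w = |z|² + λ(z² + z̄²) with 0 ≤ λ < 1/2, and let f(z, z̄) be a polynomial such that for every c > 0, f restricted to the ellipse {z : |z|² + λ(z² + z̄²) = c} extends continuously to the closed region it bounds and holomorphically to its interior. Then there exists a holomorphic polynomial P(z, w) with P(z, |z|² + λ(z² + z̄²)) = f(z, z̄) for all z. Moreover if f is homogeneous of degree d in (z, z̄), then P has weighted degree d where z has weight 1 and w has weight 2, i.e., P(z,w) = Σ_{j+2k=d} c_{j,k} z^j w^k. -/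
open Polynomial in
lemma aux_order (p : ℂ[X]) (hp : p ≠ 0) (x : ℂ) :
    analyticOrderAt (fun z => p.eval z) x = (p.rootMultiplicity x : ℕ) := by
  have han : ∀ q : ℂ[X], AnalyticAt ℂ (fun z => q.eval z) x := fun q =>
    q.differentiable.analyticAt x
  rw [(han p).analyticOrderAt_eq_natCast]
  obtain ⟨q, hq, hd⟩ := p.exists_eq_pow_rootMultiplicity_mul_and_not_dvd hp x
  refine ⟨fun z => q.eval z, han q, ?_, ?_⟩
  · intro h
    exact hd (dvd_iff_isRoot.2 h)
  · refine Filter.Eventually.of_forall fun z => ?_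
    conv_lhs => rw [hq]
    simp

lemma aux_Qc (lam : ℝ) (Q : ℂ → ℝ) (hQ : ∀ z : ℂ, Q z = ‖z‖^2 + 2 * lam * (z^2).re) (z : ℂ) :
    ((Q z : ℝ) : ℂ) = z * star z + lam * (z^2 + (star z)^2) := by
  rw [hQ]
  apply Complex.ext
  · rw [← Complex.normSq_eq_norm_sq]
    simp [Complex.normSq_apply, pow_two]
    ring
  · rw [← Complex.normSq_eq_norm_sq]
    simp [Complex.normSq_apply, pow_two]
    ring_nf

lemma aux_lower (lam : ℝ) (h0 : 0 ≤ lam) (Q : ℂ → ℝ)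
    (hQ : ∀ z : ℂ, Q z = ‖z‖^2 + 2 * lam * (z^2).re) (z : ℂ) :
    (1 - 2 * lam) * ‖z‖^2 ≤ Q z := by
  rw [hQ]
  have h1 : |(z^2).re| ≤ ‖z^2‖ := Complex.abs_re_le_norm _
  rw [norm_pow] at h1
  have h2 := (abs_le.1 h1).1
  nlinarith

lemma aux_cont (lam : ℝ) (Q : ℂ → ℝ)
    (hQ : ∀ z : ℂ, Q z = ‖z‖^2 + 2 * lam * (z^2).re) : Continuous Q := by
  rw [funext hQ]
  fun_prop

lemma aux_zero (lam : ℝ) (h0 : 0 ≤ lam) (h12 : lam < 1/2) (Q : ℂ → ℝ)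
    (hQ : ∀ z : ℂ, Q z = ‖z‖^2 + 2 * lam * (z^2).re) (c : ℝ) (h : ℂ → ℂ)
    (hc : ContinuousOn h {z | Q z ≤ c}) (hd : DifferentiableOn ℂ h {z | Q z < c})
    (hz : ∀ z, Q z = c → h z = 0) : ∀ z, Q z < c → h z = 0 := by
  have hQc := aux_cont lam Q hQ
  have hb : Bornology.IsBounded {z | Q z < c} := by
    refine (Metric.isBounded_closedBall (x := (0:ℂ)) (r := c / (1 - 2*lam) + 1)).subset ?_
    intro z hzc
    have hzc : Q z < c := hzc
    have h1 := aux_lower lam h0 Q hQ z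
    have h3 : 0 < 1 - 2 * lam := by linarith
    rw [mem_closedBall_zero_iff]
    have h4 : ‖z‖^2 ≤ c / (1 - 2*lam) := by
      rw [le_div_iff₀ h3]; linarith
    nlinarith [sq_nonneg (‖z‖ - 1)]
  have := Complex.eqOn_of_eqOn_frontier (f := h) (g := fun _ => (0:ℂ)) hb
    ⟨hd, hc.mono (closure_lt_subset_le hQc continuous_const)⟩ diffContOnCl_const
    (fun z hzf => hz z (frontier_lt_subset_eq hQc continuous_const hzf))
  exact fun z hzc => this hzc

open Polynomial in
lemma aux_pos (lam : ℝ) (h0 : 0 < lam) (h12 : lam < 1/2) (Q : ℂ → ℝ)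
    (hQ : ∀ z : ℂ, Q z = ‖z‖^2 + 2 * lam * (z^2).re) (c : ℝ) (hc0 : 0 < c) (g : ℂ → ℂ)
    (hc : ContinuousOn g {z | Q z ≤ c}) (hd : DifferentiableOn ℂ g {z | Q z < c})
    (pA pB : ℂ[X])
    (hz : ∀ z, Q z = c → g z = pA.eval z + star z * pB.eval z) : pB = 0 := by
  by_contra hne
  have hQc := aux_cont lam Q hQ
  set h : ℂ → ℂ := fun z => 2 * lam * (g z - pA.eval z) + z * pB.eval z with hh
  set D : ℂ[X] := C (1 - 4 * (lam:ℂ)^2) * X^2 + C (4 * (lam:ℂ) * c) with hD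
  have hcc : ContinuousOn h {z | Q z ≤ c} := by
    have := hc; rw [hh]; fun_prop
  have hdd : DifferentiableOn ℂ h {z | Q z < c} := by
    rw [hh]
    have h1 := fun p : ℂ[X] => p.differentiable.differentiableOn (s := {z | Q z < c})
    exact ((differentiableOn_const _).mul (hd.sub (h1 pA))).add (differentiableOn_id.mul (h1 pB))
  have key : ∀ z, Q z < c → h z ^ 2 - (pB^2 * D).eval z = 0 := by
    apply aux_zero lam h0.le h12 Q hQ c (fun z => h z ^ 2 - (pB^2 * D).eval z)
    · exact (hcc.pow 2).sub (pB^2*D).continuous.continuousOn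
    · exact (hdd.pow 2).sub (pB^2*D).differentiable.differentiableOn
    · intro z hzc
      have e := aux_Qc lam Q hQ z
      rw [hzc] at e
      simp only [hh, hz z hzc, hD, eval_mul, eval_pow, eval_add, eval_C, eval_X, e]
      ring
  -- the focus
  set r : ℝ := Real.sqrt (4 * lam * c / (1 - 4 * lam^2)) with hr
  have h4 : 0 < 1 - 4 * lam^2 := by nlinarith
  have hr0 : 0 < r := Real.sqrt_pos.2 (by positivity)
  have hr2 : (1 - 4 * lam^2) * r^2 = 4 * lam * c := by
    rw [hr, Real.sq_sqrt (by positivity)]; field_simp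
  have hr2c : (1 - 4 * (lam:ℂ)^2) * (r:ℂ)^2 = 4 * lam * c := by exact_mod_cast hr2
  set x : ℂ := r * Complex.I with hx
  have hQx : Q x < c := by
    have e : Q x = (1 - 2 * lam) * r^2 := by
      rw [hQ, hx, mul_pow, Complex.I_sq]
      simp [pow_two]
      ring
    rw [e]
    have : (1 + 2 * lam) * ((1 - 2 * lam) * r^2) < (1 + 2 * lam) * c := by nlinarith
    exact lt_of_mul_lt_mul_left this (by linarith)
  have hDf : D = (X - C x) * (C (1 - 4 * (lam:ℂ)^2) * (X + C x)) := by
    have : C (4 * (lam:ℂ) * c) = - (C (1 - 4 * (lam:ℂ)^2) * C x * C x) := by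
      rw [← C_mul, ← C_mul, ← C_neg, ← hr2c]
      congr 1
      rw [hx]
      linear_combination ((1 - 4 * (lam:ℂ)^2) * r^2) * Complex.I_sq
    rw [hD, this]; ring
  have hx0 : x ≠ 0 := by
    rw [hx]; simp [hr0.ne']
  have h4c : (1 - 4 * (lam:ℂ)^2) ≠ 0 := by exact_mod_cast h4.ne'
  have hE : eval x (C (1 - 4 * (lam:ℂ)^2) * (X + C x)) ≠ 0 := by
    simp only [eval_mul, eval_C, eval_add, eval_X]
    refine mul_ne_zero h4c ?_
    rw [← two_mul]; exact mul_ne_zero two_ne_zero hx0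
  have hE0 : (C (1 - 4 * (lam:ℂ)^2) * (X + C x)) ≠ 0 := by
    intro h; rw [h] at hE; simp at hE
  have hDne : D ≠ 0 := by
    rw [hDf]; exact mul_ne_zero (X_sub_C_ne_zero x) hE0
  have hDm : D.rootMultiplicity x = 1 := by
    rw [hDf, rootMultiplicity_mul (by rw [← hDf]; exact hDne), rootMultiplicity_X_sub_C_self,
      rootMultiplicity_eq_zero (p := C (1 - 4 * (lam:ℂ)^2) * (X + C x)) hE]
  have hopen : {z | Q z < c} ∈ nhds x := (isOpen_lt hQc continuous_const).mem_nhds hQx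
  have hev : (h^2) =ᶠ[nhds x] fun z => (pB^2*D).eval z := by
    filter_upwards [hopen] with z hzz
    exact sub_eq_zero.1 (key z hzz)
  have ho := analyticOrderAt_congr hev
  rw [analyticOrderAt_pow (hdd.analyticAt hopen),
    aux_order _ (mul_ne_zero (pow_ne_zero 2 hne) hDne),
    rootMultiplicity_mul (mul_ne_zero (pow_ne_zero 2 hne) hDne), hDm, pow_two,
    rootMultiplicity_mul (mul_ne_zero hne hne)] at ho
  cases hn : analyticOrderAt h x with
  | top => rw [hn] at ho; simp at ho; exact absurd ho.symm (by exact_mod_cast ENat.natCast_ne_top _)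
  | coe n =>
    rw [hn] at ho
    have ho' : 2 * n = rootMultiplicity x pB + rootMultiplicity x pB + 1 := by
      simp only [nsmul_eq_mul] at ho
      exact_mod_cast ho
    omega

open Polynomial in
lemma aux_nil (Q : ℂ → ℝ)
    (hQ : ∀ z : ℂ, Q z = ‖z‖^2 + 2 * (0:ℝ) * (z^2).re) (c : ℝ) (hc0 : 0 < c) (g : ℂ → ℂ)
    (hc : ContinuousOn g {z | Q z ≤ c}) (hd : DifferentiableOn ℂ g {z | Q z < c})
    (pA r : ℂ[X]) (n : ℕ) (hr : r.natDegree ≤ n)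
    (hz : ∀ z, Q z = c → z^(n+1) * (g z - pA.eval z) = r.eval z) : r = 0 := by
  by_contra hne
  have hQc := aux_cont 0 Q hQ
  have hd1 : DifferentiableOn ℂ (fun z => g z - pA.eval z) {z | Q z < c} :=
    hd.sub pA.differentiable.differentiableOn
  have key : ∀ z, Q z < c → z^(n+1) * (g z - pA.eval z) - r.eval z = 0 := by
    apply aux_zero 0 le_rfl (by norm_num) Q hQ c
      (fun z => z^(n+1) * (g z - pA.eval z) - r.eval z)
    · have := hc; fun_prop
    · exact ((differentiableOn_id.pow _).mul hd1).sub r.differentiable.differentiableOn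
    · intro z hzc
      simp [hz z hzc]
  have hopen : {z | Q z < c} ∈ nhds (0:ℂ) :=
    (isOpen_lt hQc continuous_const).mem_nhds (by simp [hQ, hc0])
  have hev : ((fun z => (X^(n+1) : ℂ[X]).eval z) * (fun z => g z - pA.eval z))
      =ᶠ[nhds 0] fun z => r.eval z := by
    filter_upwards [hopen] with z hzz
    simpa using sub_eq_zero.1 (key z hzz)
  have ho := analyticOrderAt_congr hev
  rw [analyticOrderAt_mul ((X^(n+1) : ℂ[X]).differentiable.analyticAt 0) (hd1.analyticAt hopen),
    aux_order _ (pow_ne_zero _ X_ne_zero), aux_order _ hne] at ho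
  have h1 : rootMultiplicity 0 (X^(n+1) : ℂ[X]) = n+1 := by
    have := rootMultiplicity_X_sub_C_pow (0:ℂ) (n+1)
    simpa using this
  have h2 : rootMultiplicity 0 r ≤ r.natDegree := by
    rw [← count_roots]
    exact (Multiset.count_le_card _ _).trans (card_roots' r)
  have h3 : ((n+1 : ℕ) : ℕ∞) ≤ (rootMultiplicity 0 r : ℕ) := by
    rw [← ho, h1]; exact le_self_add
  have h4 : n + 1 ≤ rootMultiplicity 0 r := by exact_mod_cast h3
  omega

/-- Span of the monomials `z^i Q^l` with weighted degree in `S`. -/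
def auxV (Q : ℂ → ℝ) (S : Set ℕ) : Set (ℂ → ℂ) :=
  {F | ∃ i l : ℕ, i + 2 * l ∈ S ∧ F = fun z => z^i * (Q z : ℂ)^l}

/-- Complementary monomials `conj z * z^i * Q^l`. -/
def auxU (Q : ℂ → ℝ) : Set (ℂ → ℂ) :=
  {F | ∃ i l : ℕ, F = fun z => star z * z^i * (Q z : ℂ)^l}

/-- Complementary monomials `conj z^(m+1) * Q^l`. -/
def auxT (Q : ℂ → ℝ) : Set (ℂ → ℂ) :=
  {F | ∃ m l : ℕ, F = fun z => (star z)^(m+1) * (Q z : ℂ)^l}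

open Polynomial in
lemma auxV_poly (Q : ℂ → ℝ) (S : Set ℕ) (c : ℝ) (F : ℂ → ℂ)
    (hF : F ∈ Submodule.span ℂ (auxV Q S)) :
    ∃ p : ℂ[X], ∀ z, Q z = c → F z = p.eval z := by
  induction hF using Submodule.span_induction with
  | mem x h =>
    obtain ⟨i, l, -, rfl⟩ := h
    exact ⟨X^i * C ((c:ℂ)^l), fun z hz => by simp [hz]⟩
  | zero => exact ⟨0, by simp⟩
  | add x y _ _ hx hy =>
    obtain ⟨p, hp⟩ := hx
    obtain ⟨q, hq⟩ := hy
    exact ⟨p + q, fun z hz => by simp [hp z hz, hq z hz]⟩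
  | smul a x _ hx =>
    obtain ⟨p, hp⟩ := hx
    exact ⟨C a * p, fun z hz => by simp [hp z hz]⟩

open Polynomial in
lemma auxU_poly (Q : ℂ → ℝ) (c : ℝ) (F : ℂ → ℂ)
    (hF : F ∈ Submodule.span ℂ (auxU Q)) :
    ∃ p : ℂ[X], ∀ z, Q z = c → F z = star z * p.eval z := by
  induction hF using Submodule.span_induction with
  | mem x h =>
    obtain ⟨i, l, rfl⟩ := h
    exact ⟨X^i * C ((c:ℂ)^l), fun z hz => by simp [hz, mul_assoc]⟩
  | zero => exact ⟨0, by simp⟩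
  | add x y _ _ hx hy =>
    obtain ⟨p, hp⟩ := hx
    obtain ⟨q, hq⟩ := hy
    exact ⟨p + q, fun z hz => by simp [hp z hz, hq z hz, mul_add]⟩
  | smul a x _ hx =>
    obtain ⟨p, hp⟩ := hx
    exact ⟨C a * p, fun z hz => by simp [hp z hz]; ring⟩

open Polynomial in
lemma auxT_poly (Q : ℂ → ℝ) (hQ : ∀ z : ℂ, (Q z : ℂ) = z * star z) (c : ℝ) (F : ℂ → ℂ)
    (hF : F ∈ Submodule.span ℂ (auxT Q)) :
    ∃ (n : ℕ) (p : ℂ[X]), p.natDegree ≤ n ∧ ∀ z, Q z = c → z^(n+1) * F z = p.eval z := by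
  induction hF using Submodule.span_induction with
  | mem x h =>
    obtain ⟨m, l, rfl⟩ := h
    refine ⟨m, C ((c:ℂ)^(m+1+l)), by simp, fun z hz => ?_⟩
    have := hQ z
    rw [hz] at this
    simp only [hz, eval_C]
    rw [← mul_assoc, ← mul_pow, ← this, ← pow_add]
  | zero => exact ⟨0, 0, by simp⟩
  | add x y _ _ hx hy =>
    obtain ⟨n, p, hn, hp⟩ := hx
    obtain ⟨k, q, hk, hq⟩ := hy
    refine ⟨n + k + 1, X^(k+1) * p + X^(n+1) * q, ?_, fun z hz => ?_⟩
    · refine (natDegree_add_le _ _).trans (max_le ?_ ?_)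
      · refine natDegree_mul_le.trans ?_
        rw [natDegree_X_pow]; omega
      · refine natDegree_mul_le.trans ?_
        rw [natDegree_X_pow]; omega
    · simp only [Pi.add_apply, eval_add, eval_mul, eval_pow, eval_X, ← hp z hz, ← hq z hz]
      ring
  | smul a x _ hx =>
    obtain ⟨n, p, hn, hp⟩ := hx
    refine ⟨n, C a * p, (natDegree_C_mul_le _ _).trans hn, fun z hz => ?_⟩
    simp only [Pi.smul_apply, smul_eq_mul, eval_mul, eval_C, ← hp z hz]
    ring

lemma auxV_coef (Q : ℂ → ℝ) (S : Set ℕ) (F : ℂ → ℂ)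
    (hF : F ∈ Submodule.span ℂ (auxV Q S)) :
    ∃ (M : ℕ) (b : ℕ → ℕ → ℂ), (∀ j k, b j k ≠ 0 → j < M ∧ k < M ∧ j + 2 * k ∈ S) ∧
      ∀ M', M ≤ M' → ∀ z, ∑ j ∈ Finset.range M', ∑ k ∈ Finset.range M',
        b j k * z^j * (Q z : ℂ)^k = F z := by
  induction hF using Submodule.span_induction with
  | mem x h =>
    obtain ⟨i, l, hS, rfl⟩ := h
    refine ⟨i + l + 1, fun j k => if j = i then (if k = l then 1 else 0) else 0, ?_, ?_⟩
    · intro j k h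
      by_cases h1 : j = i
      · by_cases h2 : k = l
        · subst h1 h2
          exact ⟨by omega, by omega, hS⟩
        · simp [h2] at h
      · simp [h1] at h
    · intro M' hM z
      rw [Finset.sum_eq_single i, Finset.sum_eq_single l]
      · simp
      · intro k _ hk; simp [hk]
      · intro h; exact absurd (Finset.mem_range.2 (by omega)) h
      · intro k _ hk; simp [hk]
      · intro h; exact absurd (Finset.mem_range.2 (by omega)) h
  | zero => exact ⟨0, fun _ _ => 0, by simp, by simp⟩
  | add x y _ _ hx hy =>
    obtain ⟨M1, b1, h1, e1⟩ := hx
    obtain ⟨M2, b2, h2, e2⟩ := hy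
    refine ⟨M1 + M2, fun j k => b1 j k + b2 j k, ?_, ?_⟩
    · intro j k h
      by_cases h3 : b1 j k = 0
      · have h4 : b2 j k ≠ 0 := by simpa [h3] using h
        obtain ⟨p, q, r⟩ := h2 j k h4
        exact ⟨by omega, by omega, r⟩
      · obtain ⟨p, q, r⟩ := h1 j k h3
        exact ⟨by omega, by omega, r⟩
    · intro M' hM z
      simp only [Pi.add_apply, ← e1 M' (by omega) z, ← e2 M' (by omega) z,
        ← Finset.sum_add_distrib, add_mul]
  | smul a x _ hx =>
    obtain ⟨M1, b1, h1, e1⟩ := hx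
    refine ⟨M1, fun j k => a * b1 j k, ?_, ?_⟩
    · intro j k h
      exact h1 j k (right_ne_zero_of_mul h)
    · intro M' hM z
      simp only [Pi.smul_apply, smul_eq_mul, ← e1 M' hM z, Finset.mul_sum, mul_assoc]

lemma aux_red_pos (lam : ℝ) (h0 : 0 < lam) (Q : ℂ → ℝ)
    (hQ : ∀ z : ℂ, Q z = ‖z‖^2 + 2 * lam * (z^2).re) (S : Set ℕ) (k : ℕ) :
    ∀ j l, j + 2 * l + k ∈ S → (fun z => z^j * (Q z : ℂ)^l * (star z)^k) ∈
      Submodule.span ℂ (auxV Q S ∪ auxU Q) := by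
  induction k using Nat.strong_induction_on with
  | _ k ih =>
    intro j l hS
    match k, ih, hS with
    | 0, _, hS =>
      apply Submodule.subset_span
      left
      exact ⟨j, l, hS, by simp⟩
    | 1, _, hS =>
      apply Submodule.subset_span
      right
      exact ⟨j, l, by funext z; ring⟩
    | k + 2, ih, hS =>
      have e1 := ih k (by omega) j (l+1) (by convert hS using 1; ring)
      have e2 := ih (k+1) (by omega) (j+1) l (by convert hS using 1; ring)
      have e3 := ih k (by omega) (j+2) l (by convert hS using 1; ring)
      have hl : (lam : ℂ) ≠ 0 := by exact_mod_cast h0.ne'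
      convert Submodule.sub_mem _ (Submodule.smul_mem _ ((lam:ℂ)⁻¹) (Submodule.sub_mem _ e1 e2)) e3
        using 1
      funext z
      simp only [Pi.sub_apply, Pi.smul_apply, smul_eq_mul]
      have e := aux_Qc lam Q hQ z
      rw [pow_succ (Q z : ℂ) l]
      generalize (Q z : ℂ)^l = q
      rw [e]
      field_simp
      ring

lemma aux_red_nil (Q : ℂ → ℝ) (hQ : ∀ z : ℂ, (Q z : ℂ) = z * star z) (S : Set ℕ) (j k : ℕ)
    (hS : j + k ∈ S) : (fun z => z^j * (star z)^k) ∈ Submodule.span ℂ (auxV Q S ∪ auxT Q) := by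
  apply Submodule.subset_span
  rcases le_or_gt k j with h | h
  · left
    obtain ⟨i, rfl⟩ := Nat.exists_eq_add_of_le h
    refine ⟨i, k, by convert hS using 1; ring, ?_⟩
    funext z
    rw [hQ]; ring
  · right
    obtain ⟨m, rfl⟩ := Nat.exists_eq_add_of_lt h
    refine ⟨m, j, ?_⟩
    funext z
    rw [hQ]; ring

theorem stmt_4 (lam : ℝ) (h0 : 0 ≤ lam) (h12 : lam < 1/2)
    (N : ℕ) (a : ℕ → ℕ → ℂ)
    (Q : ℂ → ℝ) (hQ : ∀ z : ℂ, Q z = ‖z‖^2 + 2 * lam * (z^2).re)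
    (f : ℂ → ℂ)
    (hf : ∀ z : ℂ, f z = ∑ j ∈ Finset.range N, ∑ k ∈ Finset.range N, a j k * z^j * (star z)^k)
    (hext : ∀ c : ℝ, 0 < c → ∃ g : ℂ → ℂ,
      ContinuousOn g {z | Q z ≤ c} ∧ DifferentiableOn ℂ g {z | Q z < c} ∧
      ∀ z, Q z = c → g z = f z) :
    ∃ (M : ℕ) (b : ℕ → ℕ → ℂ),
      (∀ z : ℂ, ∑ j ∈ Finset.range M, ∑ k ∈ Finset.range M, b j k * z^j * ((Q z : ℝ) : ℂ)^k = f z) ∧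
      (∀ d : ℕ, (∀ j k, a j k ≠ 0 → j + k = d) →
        ∀ j k, j < M → k < M → b j k ≠ 0 → j + 2*k = d) := by
  set S : Set ℕ := {d | ∃ j k, a j k ≠ 0 ∧ j + k = d} with hSdef
  suffices hmain : f ∈ Submodule.span ℂ (auxV Q S) by
    obtain ⟨M, b, hb, he⟩ := auxV_coef Q S f hmain
    refine ⟨M, b, he M le_rfl, fun d hd j k _ _ hne => ?_⟩
    obtain ⟨j', k', h1, h2⟩ := (hb j k hne).2.2
    rw [← h2]; exact hd j' k' h1
  have hQc := aux_Qc lam Q hQ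
  -- membership of `f` in a span, given membership of the monomials
  have hsp : ∀ W : Submodule ℂ (ℂ → ℂ),
      (∀ j k, j + k ∈ S → (fun z => z^j * (star z)^k) ∈ W) → f ∈ W := by
    intro W hW
    have e : f = ∑ j ∈ Finset.range N, ∑ k ∈ Finset.range N,
        a j k • (fun z : ℂ => z^j * (star z)^k) := by
      funext z
      rw [hf]
      simp [Finset.sum_apply, mul_assoc]
    rw [e]
    refine Submodule.sum_mem _ fun j _ => Submodule.sum_mem _ fun k _ => ?_
    by_cases h : a j k = 0
    · rw [h, zero_smul]; exact W.zero_mem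
    · exact W.smul_mem _ (hW j k ⟨j, k, h, rfl⟩)
  have hpos : ∀ z : ℂ, z ≠ 0 → 0 < Q z := fun z hz => by
    have := aux_lower lam h0 Q hQ z
    have h1 : 0 < ‖z‖ := norm_pos_iff.2 hz
    have h2 : 0 < 1 - 2 * lam := by linarith
    exact lt_of_lt_of_le (by positivity) this
  have hcontA : ∀ B : Set (ℂ → ℂ), f ∈ Submodule.span ℂ (auxV Q S ∪ B) →
      (∀ x ∈ B, x 0 = 0) →
      (∀ F ∈ Submodule.span ℂ (auxV Q S), ∀ G ∈ Submodule.span ℂ B, F + G = f →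
        ∀ z, z ≠ 0 → G z = 0) → f ∈ Submodule.span ℂ (auxV Q S) := by
    intro B hfB hB0 h
    rw [Submodule.span_union, Submodule.mem_sup] at hfB
    obtain ⟨F, hF, G, hG, hFG⟩ := hfB
    have hG0 : G 0 = 0 := by
      clear hFG
      induction hG using Submodule.span_induction with
      | mem x h => exact hB0 x h
      | zero => rfl
      | add x y _ _ hx hy => simp [hx, hy]
      | smul a x _ hx => simp [hx]
    have : G = 0 := by
      funext z
      by_cases hz : z = 0
      · rw [hz, hG0]; rfl
      · exact h F hF G hG hFG z hz
    rw [this, add_zero] at hFG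
    rwa [← hFG]
  rcases h0.eq_or_lt with h00 | h00
  · subst h00
    have hQ' : ∀ z : ℂ, (Q z : ℂ) = z * star z := fun z => by rw [hQc]; simp
    refine hcontA (auxT Q) (hsp _ fun j k h => aux_red_nil Q hQ' S j k h) ?_ ?_
    · rintro x ⟨m, l, rfl⟩; simp
    · intro F hF G hG hFG z hz
      obtain ⟨g, hgc, hgd, hge⟩ := hext (Q z) (hpos z hz)
      obtain ⟨p, hp⟩ := auxV_poly Q S (Q z) F hF
      obtain ⟨n, r, hr, hrr⟩ := auxT_poly Q hQ' (Q z) G hG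
      have := aux_nil Q hQ (Q z) (hpos z hz) g hgc hgd p r n hr (fun y hy => by
        rw [hge y hy, ← hrr y hy, ← hFG, ← hp y hy]; simp)
      have h2 := hrr z rfl
      rw [this] at h2
      simpa [hz] using h2
  · refine hcontA (auxU Q) (hsp _ fun j k h => ?_) ?_ ?_
    · simpa using aux_red_pos lam h00 Q hQ S k j 0 (by simpa using h)
    · rintro x ⟨m, l, rfl⟩; simp
    · intro F hF G hG hFG z hz
      obtain ⟨g, hgc, hgd, hge⟩ := hext (Q z) (hpos z hz)
      obtain ⟨p, hp⟩ := auxV_poly Q S (Q z) F hF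
      obtain ⟨r, hrr⟩ := auxU_poly Q (Q z) G hG
      have := aux_pos lam h00 h12 Q hQ (Q z) (hpos z hz) g hgc hgd p r (fun y hy => by
        rw [hge y hy, ← hrr y hy, ← hFG, ← hp y hy]; simp)
      have h2 := hrr z rfl
      rw [this] at h2
      simpa using h2
end

section
/- Let Ω ⊂ ℂⁿ × ℝ be a bounded domain with smooth boundary whose CR singular points (points where the tangent space to ∂Ω contains ℂⁿ × {0}, equivalently where ∂Ω is tangent to a leaf ℂⁿ × {c}) are all nondegenerate and elliptic. Then ∂Ω has exactly two CR singular points, ∂Ω is homeomorphic to the sphere S^{2n}, and for each c ∈ ℝ the slice Ω ∩ (ℂⁿ × {c}) is either empty or a bounded domain with connected smooth boundary. -/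
/-- `p` is a CR singular point of `∂Ω`: the boundary is tangent there to a leaf
`ℂⁿ × {c}`, i.e. the differential of the defining function kills `ℂⁿ × {0}`. -/
def CRSingular (n : ℕ) (ρ : ((Fin n → ℂ) × ℝ) → ℝ) (Ω : Set ((Fin n → ℂ) × ℝ))
    (p : (Fin n → ℂ) × ℝ) : Prop :=
  p ∈ frontier Ω ∧ ∀ v : Fin n → ℂ, fderiv ℝ ρ p (v, 0) = 0

/-- The model elliptic quadric `Q(z,z̄) = Σ (|z_j|² + λ_j(z_j² + z̄_j²))`. -/
noncomputable def EllipticQ (n : ℕ) (lam : Fin n → ℝ) (z : Fin n → ℂ) : ℝ :=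
  ∑ j, (‖z j‖^2 + 2 * lam j * ((z j)^2).re)

/-- `p` is a nondegenerate elliptic CR singular point: near `p` (after possibly
flipping the sign of `s`) the domain is given by `s > Q(z,z̄) + E(z,z̄)` with
`Q` elliptic nondegenerate and `E` smooth, real-valued and `O(3)`. -/
def NondegElliptic (n : ℕ) (Ω : Set ((Fin n → ℂ) × ℝ)) (p : (Fin n → ℂ) × ℝ) : Prop :=
  ∃ (lam : Fin n → ℝ) (σ : ℝ) (E : (Fin n → ℂ) → ℝ) (r : ℝ),
    (∀ j, 0 ≤ lam j ∧ lam j < 1/2) ∧ (σ = 1 ∨ σ = -1) ∧ 0 < r ∧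
    ContDiff ℝ (⊤ : ℕ∞) E ∧ E 0 = 0 ∧ fderiv ℝ E 0 = 0 ∧ iteratedFDeriv ℝ 2 E 0 = 0 ∧
    ∀ (z : Fin n → ℂ) (s : ℝ), ‖z‖ < r → |s| < r →
      ((p.1 + z, p.2 + σ * s) ∈ Ω ↔ EllipticQ n lam z + E z < s)

section Helpers

open Set Filter Topology

/-- A continuous flow with a strict Lyapunov function. -/
structure LyapFlow (X : Type*) [TopologicalSpace X] where
  φ : ℝ → X → X
  cont : Continuous (fun p : ℝ × X => φ p.1 p.2)
  zero : ∀ x, φ 0 x = x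
  add : ∀ t u x, φ (t + u) x = φ t (φ u x)
  h : X → ℝ
  hcont : Continuous h
  mono : ∀ x, (∃ t, φ t x ≠ x) → StrictMono (fun t => h (φ t x))

namespace LyapFlow

variable {X : Type*} [TopologicalSpace X]

/-- Fixed points. -/
def C (F : LyapFlow X) : Set X := {x | ∀ t, F.φ t x = x}

/-- Time reversal. -/
def rev (F : LyapFlow X) : LyapFlow X where
  φ t x := F.φ (-t) x
  cont := F.cont.comp ((continuous_fst.neg).prodMk continuous_snd)
  zero x := by simp [F.zero]
  add t u x := by rw [neg_add, F.add]
  h x := - F.h x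
  hcont := F.hcont.neg
  mono x := by
    rintro ⟨t, ht⟩ a b hab
    have := F.mono x ⟨_, ht⟩ (neg_lt_neg hab)
    simpa using this

lemma rev_C (F : LyapFlow X) : F.rev.C = F.C := by
  ext x
  constructor
  · intro hx t
    have := hx (-t)
    simpa [rev] using this
  · intro hx t
    exact hx (-t)

lemma mono' (F : LyapFlow X) {x : X} (hx : x ∉ F.C) : StrictMono (fun t => F.h (F.φ t x)) := by
  apply F.mono
  simpa [C] using hx

lemma cont_t (F : LyapFlow X) (x : X) : Continuous (fun t => F.φ t x) :=
  F.cont.comp (continuous_id.prodMk continuous_const)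

lemma cont_x (F : LyapFlow X) (t : ℝ) : Continuous (fun x => F.φ t x) :=
  F.cont.comp (continuous_const.prodMk continuous_id)

lemma neg_cancel (F : LyapFlow X) (t : ℝ) (x : X) : F.φ (-t) (F.φ t x) = x := by
  rw [← F.add]; simp [F.zero]

lemma not_C (F : LyapFlow X) {x : X} (hx : x ∉ F.C) (t : ℝ) : F.φ t x ∉ F.C := by
  intro h
  apply hx
  have h1 := h (-t)
  rw [F.neg_cancel] at h1
  rw [h1]; exact h

lemma cluster_mem [CompactSpace X] (F : LyapFlow X) {x y : X}
    (hx : x ∉ F.C)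
    (hy : MapClusterPt y atTop (fun t => F.φ t x)) : y ∈ F.C ∧ ∀ t, F.h (F.φ t x) < F.h y := by
  have hm := F.mono' hx
  have hbdd : BddAbove (range (fun t => F.h (F.φ t x))) := by
    refine (isCompact_range F.hcont).bddAbove.mono ?_
    rintro _ ⟨t, rfl⟩; exact ⟨_, rfl⟩
  have hlim := tendsto_atTop_ciSup hm.monotone hbdd
  set L := ⨆ t, F.h (F.φ t x) with hL
  have key : ∀ u, F.h (F.φ u y) = L := by
    intro u
    have h1 : MapClusterPt (F.h (F.φ u y)) atTop (fun t => F.h (F.φ u (F.φ t x))) :=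
      hy.continuousAt_comp (f := fun z => F.h (F.φ u z)) (F.hcont.comp (F.cont_x u)).continuousAt
    have h2 : Tendsto (fun t => F.h (F.φ u (F.φ t x))) atTop (𝓝 L) := by
      have : Tendsto (fun t => F.h (F.φ (u + t) x)) atTop (𝓝 L) :=
        hlim.comp (tendsto_atTop_add_const_left _ u tendsto_id)
      simpa [F.add] using this
    have h3 : ClusterPt (F.h (F.φ u y)) (𝓝 L) := ClusterPt.mono h1 h2
    exact eq_of_nhds_neBot h3
  constructor
  · by_contra hyC
    have := F.mono' hyC (zero_lt_one)
    simp only [key] at this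
    exact lt_irrefl _ this
  · intro t
    have h0 := key 0
    rw [F.zero] at h0
    rw [h0]
    exact lt_of_lt_of_le (hm (lt_add_one t)) (le_ciSup hbdd (t + 1))

/-- Strict local maxima (isolated in `C`) attract. -/
lemma attract [CompactSpace X] [T2Space X] (F : LyapFlow X) {p : X} (hp : p ∈ F.C)
    (hmax : ∀ᶠ x in 𝓝[≠] p, F.h x < F.h p ∧ x ∉ F.C) :
    ∃ N : Set X, IsOpen N ∧ p ∈ N ∧ ∀ x ∈ N, Tendsto (fun t => F.φ t x) atTop (𝓝 p) := by
  rw [eventually_nhdsWithin_iff] at hmax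
  obtain ⟨K, ⟨hK, hKc⟩, hKs⟩ := (closed_nhds_basis p).mem_iff.1 hmax
  simp only [id] at hKs
  have hpi : p ∈ interior K := mem_interior_iff_mem_nhds.2 hK
  obtain ⟨m, hm, hmK⟩ : ∃ m < F.h p, ∀ x ∈ frontier K, F.h x ≤ m := by
    rcases (frontier K).eq_empty_or_nonempty with he | hne
    · exact ⟨F.h p - 1, by linarith, by simp [he]⟩
    · obtain ⟨y, hy, hy2⟩ := (isClosed_frontier (s := K)).isCompact.exists_isMaxOn hne
        F.hcont.continuousOn
      refine ⟨F.h y, ?_, fun x hx => hy2 hx⟩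
      have hyK : y ∈ K := hKc.frontier_subset hy
      refine (hKs hyK ?_).1
      rintro rfl
      exact hy.2 hpi
  refine ⟨interior K ∩ {x | m < F.h x}, isOpen_interior.inter (isOpen_lt continuous_const F.hcont),
    ⟨hpi, hm⟩, ?_⟩
  rintro x ⟨hxK, hxm⟩
  by_cases hxC : x ∈ F.C
  · have : x = p := by
      by_contra hne
      exact (hKs (interior_subset hxK) hne).2 hxC
    subst this
    simp only [hxC _]
    exact tendsto_const_nhds
  have hstay : ∀ t, 0 ≤ t → F.φ t x ∈ K := by
    have hpre : IsPreconnected ((fun t => F.φ t x) '' Ici 0) :=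
      isPreconnected_Ici.image _ (F.cont_t x).continuousOn
    have hsub : (fun t => F.φ t x) '' Ici 0 ⊆ interior K := by
      refine hpre.subset_left_of_subset_union isOpen_interior hKc.isOpen_compl ?_ ?_ ?_
      · exact disjoint_compl_right.mono_left interior_subset
      · rintro _ ⟨t, ht, rfl⟩
        by_cases hin : F.φ t x ∈ interior K
        · exact Or.inl hin
        · right
          intro hk
          have h1 := hmK (F.φ t x) ⟨subset_closure hk, hin⟩
          have h2 := (F.mono' hxC).monotone (show (0:ℝ) ≤ t from ht)
          simp only [F.zero] at h2
          exact absurd hxm (not_lt.2 (h2.trans h1))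
      · exact ⟨x, ⟨0, by simp, F.zero x⟩, hxK⟩
    intro t ht
    exact interior_subset (hsub ⟨t, ht, rfl⟩)
  refine tendsto_nhds_of_unique_mapClusterPt ?_
  intro y hy
  have hyC := (F.cluster_mem hxC hy).1
  have hyK : y ∈ K := by
    have : MapClusterPt y atTop (fun t => F.φ t x) := hy
    have h2 : ClusterPt y (𝓟 K) := by
      refine ClusterPt.mono hy ?_
      rw [le_principal_iff]
      exact (eventually_ge_atTop (0:ℝ)).mono hstay
    exact (isClosed_iff_clusterPt.1 hKc) y h2
  by_contra hne
  exact (hKs hyK hne).2 hyC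

/-- Type condition: each fixed point is an isolated strict local extremum. -/
def Good (F : LyapFlow X) : Prop :=
  ∀ p ∈ F.C, (∀ᶠ x in 𝓝[≠] p, F.h x < F.h p ∧ x ∉ F.C) ∨
    (∀ᶠ x in 𝓝[≠] p, F.h p < F.h x ∧ x ∉ F.C)

lemma Good.rev {F : LyapFlow X} (hF : F.Good) : F.rev.Good := by
  intro p hp
  rw [rev_C] at *
  rcases hF p hp with h | h
  · right; simpa [LyapFlow.rev] using h
  · left; simpa [LyapFlow.rev] using h

lemma exists_limit [CompactSpace X] [T2Space X] (F : LyapFlow X) (hF : F.Good) {x : X}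
    (hx : x ∉ F.C) :
    ∃ p ∈ F.C, (∀ᶠ x in 𝓝[≠] p, F.h x < F.h p ∧ x ∉ F.C) ∧
      Tendsto (fun t => F.φ t x) atTop (𝓝 p) := by
  obtain ⟨y, hy⟩ := exists_clusterPt_of_compactSpace (map (fun t => F.φ t x) atTop)
  have hy : MapClusterPt y atTop (fun t => F.φ t x) := hy
  obtain ⟨hyC, hlt⟩ := F.cluster_mem hx hy
  have hmax : ∀ᶠ x in 𝓝[≠] y, F.h x < F.h y ∧ x ∉ F.C := by
    rcases hF y hyC with h | h
    · exact h
    · exfalso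
      rw [eventually_nhdsWithin_iff] at h
      obtain ⟨t, ht⟩ := (hy.frequently h).exists
      have hne : F.φ t x ≠ y := by
        intro h; exact F.not_C hx t (h ▸ hyC)
      exact lt_asymm (hlt t) (ht hne).1
  refine ⟨y, hyC, hmax, ?_⟩
  obtain ⟨N, hNo, hyN, hN⟩ := F.attract hyC hmax
  obtain ⟨t, ht⟩ := (hy.frequently (hNo.mem_nhds hyN)).exists
  have := (hN _ ht).comp (tendsto_atTop_add_const_right atTop (-t) tendsto_id)
  refine this.congr ?_
  intro u
  simp [← F.add]

lemma unique_max [CompactSpace X] [T2Space X] (F : LyapFlow X) (hF : F.Good)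
    {O : Set X} (hO : IsConnected O) (hd : Dense O) (hOC : ∀ x ∈ O, x ∉ F.C) :
    ∃ p ∈ F.C, (∀ᶠ x in 𝓝[≠] p, F.h x < F.h p ∧ x ∉ F.C) ∧ (∀ x, F.h x ≤ F.h p) ∧
      (∀ q ∈ F.C, (∀ᶠ x in 𝓝[≠] q, F.h x < F.h q ∧ x ∉ F.C) → q = p) ∧
      ∀ x ∉ F.C, Tendsto (fun t => F.φ t x) atTop (𝓝 p) := by
  have hsub : ∀ p ∈ F.C, (∀ᶠ x in 𝓝[≠] p, F.h x < F.h p ∧ x ∉ F.C) →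
      ∀ x ∈ O, Tendsto (fun t => F.φ t x) atTop (𝓝 p) := by
    intro p hp hmax
    let B : X → Set X := fun p => {x | Tendsto (fun t => F.φ t x) atTop (𝓝 p)}
    have hB : ∀ p ∈ F.C, (∀ᶠ x in 𝓝[≠] p, F.h x < F.h p ∧ x ∉ F.C) → IsOpen (B p) := by
      intro p hp hmax
      obtain ⟨N, hNo, hpN, hN⟩ := F.attract hp hmax
      have : B p = ⋃ t, (fun x => F.φ t x) ⁻¹' N := by
        ext x
        simp only [mem_iUnion, mem_preimage]
        constructor
        · intro hx
          exact (hx.eventually (hNo.mem_nhds hpN)).exists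
        · rintro ⟨t, ht⟩
          have := (hN _ ht).comp (tendsto_atTop_add_const_right atTop (-t) tendsto_id)
          refine this.congr ?_
          intro u
          simp [← F.add]
      rw [this]
      exact isOpen_iUnion fun t => hNo.preimage (F.cont_x t)
    let V : Set X := ⋃ q ∈ {q | q ∈ F.C ∧ (∀ᶠ x in 𝓝[≠] q, F.h x < F.h q ∧ x ∉ F.C) ∧ q ≠ p}, B q
    have hV : IsOpen V := isOpen_biUnion fun q hq => hB q hq.1 hq.2.1
    have := hO.isPreconnected.subset_left_of_subset_union (hB p hp hmax) hV ?_ ?_ ?_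
    · exact this
    · rw [Set.disjoint_left]
      intro x hx hxV
      simp only [V, mem_iUnion] at hxV
      obtain ⟨q, ⟨_, _, hqp⟩, hq⟩ := hxV
      exact hqp (tendsto_nhds_unique hq hx)
    · intro x hx
      obtain ⟨q, hq, hqm, hqt⟩ := F.exists_limit hF (hOC x hx)
      by_cases hqp : q = p
      · left; subst hqp; exact hqt
      · right
        simp only [V, mem_iUnion]
        exact ⟨q, ⟨hq, hqm, hqp⟩, hqt⟩
    · obtain ⟨N, hNo, hpN, hN⟩ := F.attract hp hmax
      obtain ⟨x, hxN, hxO⟩ := hd.inter_open_nonempty N hNo ⟨p, hpN⟩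
      exact ⟨x, hxO, hN x hxN⟩
  have huniq : ∀ p ∈ F.C, (∀ᶠ x in 𝓝[≠] p, F.h x < F.h p ∧ x ∉ F.C) →
      ∀ q ∈ F.C, (∀ᶠ x in 𝓝[≠] q, F.h x < F.h q ∧ x ∉ F.C) → q = p := by
    intro p hp hpm q hq hqm
    obtain ⟨x, hx⟩ := hO.nonempty
    exact tendsto_nhds_unique (hsub q hq hqm x hx) (hsub p hp hpm x hx)
  obtain ⟨x₀, hx₀⟩ := hO.nonempty
  have : Nonempty X := ⟨x₀⟩
  obtain ⟨p, hp, hpm, _⟩ := F.exists_limit hF (hOC x₀ hx₀)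
  have hlim : ∀ x ∉ F.C, Tendsto (fun t => F.φ t x) atTop (𝓝 p) := by
    intro x hx
    obtain ⟨q, hq, hqm, hqt⟩ := F.exists_limit hF hx
    rwa [huniq p hp hpm q hq hqm] at hqt
  refine ⟨p, hp, hpm, ?_, huniq p hp hpm, hlim⟩
  have hO' : ∀ x ∈ O, F.h x ≤ F.h p := by
    intro x hx
    have h1 : Tendsto (fun t => F.h (F.φ t x)) atTop (𝓝 (F.h p)) :=
      (F.hcont.tendsto p).comp (hlim x (hOC x hx))
    have := (F.mono' (hOC x hx)).monotone.ge_of_tendsto h1 0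
    simpa [F.zero] using this
  intro x
  have hcl : IsClosed {x | F.h x ≤ F.h p} := isClosed_le F.hcont continuous_const
  have : closure O ⊆ {x | F.h x ≤ F.h p} := hcl.closure_subset_iff.2 hO'
  exact this (hd x)

/-- The global structure: exactly two fixed points, all other orbits go from `p` to `q`. -/
lemma poles [CompactSpace X] [T2Space X] (F : LyapFlow X) (hF : F.Good)
    {O : Set X} (hO : IsConnected O) (hd : Dense O) (hOC : ∀ x ∈ O, x ∉ F.C) :
    ∃ p q : X, p ≠ q ∧ F.C = {p, q} ∧ F.h p < F.h q ∧ 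
      (∀ᶠ x in 𝓝[≠] p, F.h p < F.h x ∧ x ∉ F.C) ∧
      (∀ x ∉ F.C, F.h p < F.h x ∧ F.h x < F.h q) ∧
      (∀ x ∉ F.C, Tendsto (fun t => F.h (F.φ t x)) atTop (𝓝 (F.h q))) ∧
      (∀ x ∉ F.C, Tendsto (fun t => F.h (F.φ t x)) atBot (𝓝 (F.h p))) := by
  obtain ⟨q, hq, hqm, hqge, hqu, hqt⟩ := F.unique_max hF hO hd hOC
  obtain ⟨p, hp, hpm, hpge, hpu, hpt⟩ := F.rev.unique_max hF.rev hO hd 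
    (by simpa only [rev_C] using hOC)
  simp only [rev_C] at *
  have hpm' : ∀ᶠ x in 𝓝[≠] p, F.h p < F.h x ∧ x ∉ F.C := by simpa [LyapFlow.rev] using hpm
  have hq1 : ∀ x ∉ F.C, Tendsto (fun t => F.h (F.φ t x)) atTop (𝓝 (F.h q)) := fun x hx =>
    (F.hcont.tendsto q).comp (hqt x hx)
  have hp1 : ∀ x ∉ F.C, Tendsto (fun t => F.h (F.φ t x)) atBot (𝓝 (F.h p)) := by
    intro x hx
    have := ((F.hcont.tendsto p).comp (hpt x hx)).comp tendsto_neg_atBot_atTop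
    refine this.congr ?_
    intro t
    simp [LyapFlow.rev]
  have hbet : ∀ x ∉ F.C, F.h p < F.h x ∧ F.h x < F.h q := by
    intro x hx
    have hm := F.mono' hx
    constructor
    · have h1 := hm.monotone.le_of_tendsto (hp1 x hx) (-1)
      have h2 := hm (show (-1:ℝ) < 0 by norm_num)
      simp only [F.zero] at h2
      exact h1.trans_lt h2
    · have h1 := hm.monotone.ge_of_tendsto (hq1 x hx) 1
      have h2 := hm (show (0:ℝ) < 1 by norm_num)
      simp only [F.zero] at h2
      exact h2.trans_le h1
  have hlt : F.h p < F.h q := by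
    obtain ⟨x, hx⟩ := hO.nonempty
    exact (hbet x (hOC x hx)).1.trans (hbet x (hOC x hx)).2
  refine ⟨p, q, ?_, ?_, hlt, hpm', hbet, hq1, hp1⟩
  · rintro rfl; exact lt_irrefl _ hlt
  · ext x
    simp only [mem_insert_iff, mem_singleton_iff]
    constructor
    · intro hx
      rcases hF x hx with h | h
      · right; exact hqu x hx h
      · left; exact hpu x hx (by simpa [LyapFlow.rev] using h)
    · rintro (rfl | rfl)
      · exact hp
      · exact hq

/-- Existence and uniqueness of the flow time to a given level. -/
lemma exists_time (F : LyapFlow X) {a b c : ℝ} {x : X} 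
    (h1 : Tendsto (fun t => F.h (F.φ t x)) atTop (𝓝 b))
    (h2 : Tendsto (fun t => F.h (F.φ t x)) atBot (𝓝 a)) (hac : a < c) (hcb : c < b) :
    ∃ t, F.h (F.φ t x) = c := by
  obtain ⟨t1, ht1⟩ := (h1.eventually (lt_mem_nhds hcb)).exists
  obtain ⟨t2, ht2⟩ := (h2.eventually (gt_mem_nhds hac)).exists
  exact mem_range_of_exists_le_of_exists_ge (F.hcont.comp (F.cont_t x)) ⟨t2, ht2.le⟩ ⟨t1, ht1.le⟩

/-- The projection along orbits onto the level `c`. -/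
lemma exists_proj (F : LyapFlow X) {a b c : ℝ} 
    (h1 : ∀ x ∉ F.C, Tendsto (fun t => F.h (F.φ t x)) atTop (𝓝 b))
    (h2 : ∀ x ∉ F.C, Tendsto (fun t => F.h (F.φ t x)) atBot (𝓝 a)) (hac : a < c) (hcb : c < b) :
    ∃ T : X → ℝ, (∀ x ∉ F.C, F.h (F.φ (T x) x) = c) ∧
      ContinuousOn T F.Cᶜ ∧ ∀ x ∉ F.C, F.h x = c → T x = 0 := by
  classical
  have hex : ∀ x, ∃ t, x ∉ F.C → F.h (F.φ t x) = c := by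
    intro x
    by_cases hx : x ∈ F.C
    · exact ⟨0, fun h => absurd hx h⟩
    · obtain ⟨t, ht⟩ := F.exists_time (h1 x hx) (h2 x hx) hac hcb
      exact ⟨t, fun _ => ht⟩
  choose T hT using hex
  refine ⟨T, hT, ?_, ?_⟩
  · intro x hx
    rw [ContinuousWithinAt, tendsto_order]
    constructor
    · intro u hu
      have hlt := F.mono' hx hu
      simp only [hT x hx] at hlt
      have hev : ∀ᶠ y in 𝓝[F.Cᶜ] x, F.h (F.φ u y) < c :=
        nhdsWithin_le_nhds ((F.hcont.comp (F.cont_x u)).continuousAt.eventually_lt_const hlt)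
      filter_upwards [hev, self_mem_nhdsWithin] with y hy hyC
      rw [← hT y hyC] at hy
      exact (F.mono' hyC).lt_iff_lt.1 hy
    · intro u hu
      have hlt := F.mono' hx hu
      simp only [hT x hx] at hlt
      have hev : ∀ᶠ y in 𝓝[F.Cᶜ] x, c < F.h (F.φ u y) :=
        nhdsWithin_le_nhds ((F.hcont.comp (F.cont_x u)).continuousAt.eventually_const_lt hlt)
      filter_upwards [hev, self_mem_nhdsWithin] with y hy hyC
      rw [← hT y hyC] at hy
      exact (F.mono' hyC).lt_iff_lt.1 hy
  · intro x hx hxc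
    apply (F.mono' hx).injective
    simp only [hT x hx, F.zero, hxc]

end LyapFlow

section FlowExistence

variable {E : Type*} [NormedAddCommGroup E] [NormedSpace ℝ E]

lemma global_curve [CompleteSpace E] (V : E → E) (K : NNReal) (hV : LipschitzWith K V) (M : NNReal)
    (hM : ∀ x, ‖V x‖ ≤ M) (x : E) :
    ∃ γ : ℝ → E, γ 0 = x ∧ ∀ t, HasDerivAt γ (V (γ t)) t := by
  have hloc : ∀ N : ℕ, ∃ γ : ℝ → E, γ 0 = x ∧
      ∀ t ∈ Ioo (-(N + 1 : ℝ)) (N + 1), HasDerivAt γ (V (γ t)) t := by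
    intro N
    have h0 : (0:ℝ) ∈ Icc (-(N + 1 : ℝ)) (N + 1) := by
      constructor <;> [(have : (0:ℝ) ≤ N := Nat.cast_nonneg N; linarith); positivity]
    have hpl : IsPicardLindelof (fun _ => V) (⟨0, h0⟩ : Icc (-(N + 1 : ℝ)) (N + 1)) x
        (M * (N + 1)) 0 M K := by
      apply IsPicardLindelof.of_time_independent
      · intro y _; exact hM y
      · exact hV.lipschitzOnWith
      · simp
    obtain ⟨γ, hγ0, hγ⟩ := hpl.exists_eq_forall_mem_Icc_hasDerivWithinAt₀
    refine ⟨γ, hγ0, fun t ht => ?_⟩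
    exact (hγ t (Ioo_subset_Icc_self ht)).hasDerivAt (Icc_mem_nhds ht.1 ht.2)
  choose γ hγ0 hγ using hloc
  have hcons : ∀ N N' : ℕ, N ≤ N' → ∀ t ∈ Ioo (-(N + 1 : ℝ)) (N + 1), γ N t = γ N' t := by
    intro N N' hNN' t ht
    have hcast : (N:ℝ) ≤ N' := by exact_mod_cast hNN'
    have := ODE_solution_unique_of_mem_Ioo (v := fun _ => V) (s := fun _ => univ) (K := K)
      (f := γ N) (g := γ N') (a := -(N + 1 : ℝ)) (b := N + 1) (t₀ := 0)
      (fun t _ => hV.lipschitzOnWith) ?_ (fun t ht => ⟨hγ N t ht, trivial⟩)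
      (fun t ht => ⟨hγ N' t ⟨by linarith [ht.1], by linarith [ht.2]⟩, trivial⟩)
      (by rw [hγ0, hγ0])
    · exact this ht
    · constructor <;> [(have : (0:ℝ) ≤ N := Nat.cast_nonneg N; linarith); positivity]
  have hmem : ∀ t : ℝ, ∀ N : ℕ, |t| ≤ N → t ∈ Ioo (-(N + 1 : ℝ)) (N + 1) := by
    intro t N h
    have := abs_le.1 h
    constructor <;> linarith
  refine ⟨fun t => γ ⌈|t|⌉₊ t, by simp [hγ0], ?_⟩
  intro t
  set N := ⌈|t| + 1⌉₊ with hN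
  have hNt : |t| + 1 ≤ N := Nat.le_ceil _
  have heq : ∀ u : ℝ, |u| ≤ |t| + 1 → γ ⌈|u|⌉₊ u = γ N u := by
    intro u hu
    apply hcons _ _ (Nat.ceil_mono hu) u (hmem u _ (Nat.le_ceil _))
  have h1 : HasDerivAt (γ N) (V (γ N t)) t := hγ N t (hmem t N (by linarith))
  have h2 : (fun t => γ ⌈|t|⌉₊ t) =ᶠ[𝓝 t] γ N := by
    have : ∀ᶠ u in 𝓝 t, |u| < |t| + 1 := 
      continuous_abs.continuousAt.eventually_lt_const (by linarith)
    filter_upwards [this] with u hu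
    exact heq u hu.le
  have h3 := h1.congr_of_eventuallyEq h2
  have h4 : γ ⌈|t|⌉₊ t = γ N t := heq t (by linarith)
  simpa [h4] using h3

lemma gron_pos (V : E → E) (K : NNReal) (hV : LipschitzWith K V) {f g : ℝ → E}
    (hf : ∀ t, HasDerivAt f (V (f t)) t) (hg : ∀ t, HasDerivAt g (V (g t)) t) {t : ℝ}
    (ht : 0 ≤ t) : dist (f t) (g t) ≤ dist (f 0) (g 0) * Real.exp (K * t) := by
  have := dist_le_of_trajectories_ODE (v := fun _ => V) (K := K) (f := f) (g := g) (a := 0) (b := t)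
    (δ := dist (f 0) (g 0)) (fun _ => hV)
    (fun t _ => (hf t).continuousAt.continuousWithinAt) (fun t _ => (hf t).hasDerivWithinAt)
    (fun t _ => (hg t).continuousAt.continuousWithinAt) (fun t _ => (hg t).hasDerivWithinAt)
    le_rfl t ⟨ht, le_rfl⟩
  simpa using this

lemma gron_abs (V : E → E) (K : NNReal) (hV : LipschitzWith K V) {f g : ℝ → E}
    (hf : ∀ t, HasDerivAt f (V (f t)) t) (hg : ∀ t, HasDerivAt g (V (g t)) t) (t : ℝ) :
    dist (f t) (g t) ≤ dist (f 0) (g 0) * Real.exp (K * |t|) := by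
  rcases le_total 0 t with ht | ht
  · rw [abs_of_nonneg ht]; exact gron_pos V K hV hf hg ht
  · have hW : LipschitzWith K (fun x => - V x) := by
      intro x y
      simpa using hV x y
    have hr : ∀ {f : ℝ → E}, (∀ t, HasDerivAt f (V (f t)) t) →
        ∀ t, HasDerivAt (fun t => f (-t)) (- V (f (-t))) t := by
      intro f hf t
      have := (hf (-t)).scomp t (hasDerivAt_neg t)
      simpa [Function.comp_def] using this
    have := gron_pos _ K hW (hr hf) (hr hg) (neg_nonneg.2 ht)
    rw [abs_of_nonpos ht]
    simpa using this

lemma exists_flow [CompleteSpace E] (V : E → E) (K : NNReal) (hV : LipschitzWith K V) (M : NNReal)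
    (hM : ∀ x, ‖V x‖ ≤ M) :
    ∃ φ : ℝ → E → E, Continuous (fun p : ℝ × E => φ p.1 p.2) ∧ (∀ x, φ 0 x = x) ∧
      (∀ t u x, φ (t + u) x = φ t (φ u x)) ∧
      ∀ x t, HasDerivAt (fun t => φ t x) (V (φ t x)) t := by
  choose γ hγ0 hγ using fun x => global_curve V K hV M hM x
  refine ⟨fun t x => γ x t, ?_, hγ0, ?_, hγ⟩
  · rw [continuous_iff_continuousAt]
    rintro ⟨t0, x0⟩
    rw [ContinuousAt, tendsto_iff_dist_tendsto_zero]
    have hb : ∀ p : ℝ × E, dist (γ p.2 p.1) (γ x0 t0) ≤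
        dist p.2 x0 * Real.exp (K * |p.1|) + dist (γ x0 p.1) (γ x0 t0) := by
      intro p
      have h1 := gron_abs V K hV (hγ p.2) (hγ x0) p.1
      rw [hγ0, hγ0] at h1
      exact (dist_triangle _ (γ x0 p.1) _).trans (by gcongr)
    have hc : Continuous (γ x0) := continuous_iff_continuousAt.2 fun t => (hγ x0 t).continuousAt
    have hlim : Tendsto (fun p : ℝ × E => dist p.2 x0 * Real.exp (K * |p.1|) +
        dist (γ x0 p.1) (γ x0 t0)) (𝓝 (t0, x0)) (𝓝 0) := by
      have : Continuous (fun p : ℝ × E => dist p.2 x0 * Real.exp (K * |p.1|) +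
        dist (γ x0 p.1) (γ x0 t0)) := by fun_prop
      have := this.tendsto (t0, x0)
      simpa using this
    exact squeeze_zero (fun _ => dist_nonneg) hb hlim
  · intro t u x
    have := ODE_solution_unique_univ (v := fun _ => V) (s := fun _ => univ) (K := K)
      (f := fun t => γ x (t + u)) (g := γ (γ x u)) (t₀ := 0) (fun t => hV.lipschitzOnWith)
      (fun t => ⟨?_, trivial⟩) (fun t => ⟨hγ _ t, trivial⟩) (by simp [hγ0])
    · exact congrFun this t
    · exact (hγ x (t + u)).comp_add_const t u

/-- Solutions of `f' = k f` keep their sign. -/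
lemma linear_ode_formula {f k : ℝ → ℝ} (hk : Continuous k) (hf : ∀ t, HasDerivAt f (k t * f t) t)
    (t : ℝ) : f t = f 0 * Real.exp (∫ u in (0:ℝ)..t, k u) := by
  have hI : ∀ t, HasDerivAt (fun t => ∫ u in (0:ℝ)..t, k u) (k t) t := fun t =>
    intervalIntegral.integral_hasDerivAt_right (hk.intervalIntegrable _ _)
      (hk.stronglyMeasurableAtFilter _ _) hk.continuousAt
  have hd : ∀ t, HasDerivAt (fun t => f t * Real.exp (-∫ u in (0:ℝ)..t, k u)) 0 t := by
    intro t
    have := (hf t).mul (hI t).neg.exp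
    exact this.congr_deriv (by ring)
  have hconst := is_const_of_deriv_eq_zero (fun t => (hd t).differentiableAt)
    (fun t => (hd t).deriv) t 0
  simp only [intervalIntegral.integral_same, neg_zero, Real.exp_zero, mul_one] at hconst
  rw [← hconst, mul_assoc, ← Real.exp_add]
  simp

end FlowExistence

section LocalStructure

variable {n : ℕ}

lemma ellipticQ_smul (lam : Fin n → ℝ) (t : ℝ) (z : Fin n → ℂ) :
    EllipticQ n lam (t • z) = t ^ 2 * EllipticQ n lam z := by
  unfold EllipticQ
  rw [Finset.mul_sum]
  refine Finset.sum_congr rfl fun j _ => ?_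
  have h1 : ((t • z) j) ^ 2 = ((t ^ 2 : ℝ) : ℂ) * (z j) ^ 2 := by
    simp only [Pi.smul_apply, Complex.real_smul]; push_cast; ring
  have h2 : ‖(t • z) j‖ ^ 2 = t ^ 2 * ‖z j‖ ^ 2 := by
    simp only [Pi.smul_apply, norm_smul, mul_pow, Real.norm_eq_abs, sq_abs]
  rw [h1, h2, Complex.re_ofReal_mul]
  ring

lemma ellipticQ_cont (lam : Fin n → ℝ) : Continuous (EllipticQ n lam) := by
  unfold EllipticQ
  fun_prop

lemma ellipticQ_lower (hn : 1 ≤ n) (lam : Fin n → ℝ) (hl : ∀ j, 0 ≤ lam j ∧ lam j < 1/2) :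
    ∃ c > 0, ∀ z : Fin n → ℂ, c * ‖z‖ ^ 2 ≤ EllipticQ n lam z := by
  have : Nonempty (Fin n) := ⟨⟨0, hn⟩⟩
  obtain ⟨j0, hj0⟩ := Finite.exists_min (fun j => 1 - 2 * lam j)
  have hc : 0 < 1 - 2 * lam j0 := by linarith [(hl j0).2]
  refine ⟨1 - 2 * lam j0, hc, fun z => ?_⟩
  have hterm : ∀ j, (1 - 2 * lam j0) * ‖z j‖ ^ 2 ≤ ‖z j‖^2 + 2 * lam j * ((z j)^2).re := by
    intro j
    have h1 : -‖z j‖ ^ 2 ≤ ((z j)^2).re := by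
      have := Complex.abs_re_le_norm ((z j)^2)
      rw [norm_pow] at this
      linarith [neg_abs_le ((z j)^2).re]
    have h2 : (1 - 2 * lam j0) * ‖z j‖ ^ 2 ≤ (1 - 2 * lam j) * ‖z j‖ ^ 2 := by
      have := hj0 j
      gcongr
    nlinarith [(hl j).1]
  obtain ⟨j1, hj1⟩ := Finite.exists_max (fun j => ‖z j‖)
  have hz : ‖z‖ = ‖z j1‖ := le_antisymm ((pi_norm_le_iff_of_nonneg (norm_nonneg _)).2 hj1)
    (norm_le_pi_norm z j1)
  rw [hz]
  unfold EllipticQ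
  have h3 : (1 - 2 * lam j0) * ‖z j1‖ ^ 2 ≤ ∑ j, (1 - 2 * lam j0) * ‖z j‖ ^ 2 :=
    Finset.single_le_sum (f := fun j => (1 - 2 * lam j0) * ‖z j‖ ^ 2)
      (fun j _ => by positivity) (Finset.mem_univ j1)
  exact h3.trans (Finset.sum_le_sum fun j _ => hterm j)

lemma radial_mono (hn : 1 ≤ n) (lam : Fin n → ℝ) (hl : ∀ j, 0 ≤ lam j ∧ lam j < 1/2)
    (E : (Fin n → ℂ) → ℝ) (hE : ContDiff ℝ (⊤ : ℕ∞) E) (hE1 : fderiv ℝ E 0 = 0)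
    (hE2 : iteratedFDeriv ℝ 2 E 0 = 0) :
    ∃ r > 0, ∀ z : Fin n → ℂ, z ≠ 0 → ‖z‖ < r →
      StrictMonoOn (fun t : ℝ => EllipticQ n lam (t • z) + E (t • z)) (Icc 0 1) := by
  obtain ⟨c, hc, hcQ⟩ := ellipticQ_lower hn lam hl
  have hdd : fderiv ℝ (fderiv ℝ E) 0 = 0 := by
    ext u v
    have := iteratedFDeriv_two_apply (𝕜 := ℝ) E 0 ![u, v]
    rw [hE2] at this
    simpa using this.symm
  have hDd : DifferentiableAt ℝ (fderiv ℝ E) 0 :=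
    ((hE.fderiv_right (m := 1) (by norm_cast)).differentiable (by norm_num)) 0
  have hD : HasFDerivAt (fderiv ℝ E) (0 : (Fin n → ℂ) →L[ℝ] ((Fin n → ℂ) →L[ℝ] ℝ)) 0 := by
    rw [← hdd]; exact hDd.hasFDerivAt
  have hev : ∀ᶠ w in 𝓝 (0 : Fin n → ℂ), ‖fderiv ℝ E w‖ ≤ c * ‖w‖ := by
    have := (hasFDerivAt_iff_isLittleO.1 hD).def hc
    simpa [hE1] using this
  obtain ⟨r, hr, hrE⟩ := Metric.eventually_nhds_iff.1 hev
  refine ⟨r, hr, fun z hz hzr => ?_⟩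
  have hd : ∀ t : ℝ, HasDerivAt (fun t : ℝ => EllipticQ n lam (t • z) + E (t • z))
      (2 * t * EllipticQ n lam z + fderiv ℝ E (t • z) z) t := by
    intro t
    have h1 : HasDerivAt (fun t : ℝ => E (t • z)) (fderiv ℝ E (t • z) z) t := by
      have ha : HasFDerivAt E (fderiv ℝ E (t • z)) (t • z) :=
        (hE.differentiable (by simp) _).hasFDerivAt
      have hb : HasDerivAt (fun t : ℝ => t • z) ((1:ℝ) • z) t :=
        (hasDerivAt_id t).smul_const z
      have := ha.comp_hasDerivAt t hb
      simpa [Function.comp_def] using this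
    have h2 : HasDerivAt (fun t : ℝ => EllipticQ n lam (t • z)) (2 * t * EllipticQ n lam z) t := by
      simp only [ellipticQ_smul]
      have := (hasDerivAt_pow 2 t).mul_const (EllipticQ n lam z)
      simpa using this
    exact h2.add h1
  refine strictMonoOn_of_deriv_pos (convex_Icc 0 1) 
    (fun t _ => (hd t).continuousAt.continuousWithinAt) ?_
  intro t ht
  rw [interior_Icc] at ht
  rw [(hd t).deriv]
  have hzpos : 0 < ‖z‖ := norm_pos_iff.2 hz
  have htz : ‖t • z‖ = t * ‖z‖ := by rw [norm_smul, Real.norm_of_nonneg ht.1.le]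
  have hb := hrE (y := t • z) (by
    rw [dist_zero_right, htz]
    have : t * ‖z‖ ≤ 1 * ‖z‖ := by gcongr; exact ht.2.le
    linarith)
  have h3 : |fderiv ℝ E (t • z) z| ≤ c * (t * ‖z‖) * ‖z‖ := by
    rw [← htz]
    have h0 := (fderiv ℝ E (t • z)).le_opNorm z
    rw [Real.norm_eq_abs] at h0
    exact h0.trans (by gcongr)
  have h4 := neg_abs_le (fderiv ℝ E (t • z) z)
  have h5 : t * (c * ‖z‖ ^ 2) ≤ t * EllipticQ n lam z := by
    have := ht.1
    gcongr
    exact hcQ z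
  have h6 : 0 < t * (c * ‖z‖ ^ 2) := by have := ht.1; positivity
  nlinarith

/-- The local graph description used in the sequel. -/
def LocGraph (n : ℕ) (Ω : Set ((Fin n → ℂ) × ℝ)) (p : (Fin n → ℂ) × ℝ) (σ : ℝ)
    (q : (Fin n → ℂ) → ℝ) (r : ℝ) : Prop :=
  0 < r ∧ Continuous q ∧ q 0 = 0 ∧
    (∀ z : Fin n → ℂ, z ≠ 0 → ‖z‖ < r → StrictMonoOn (fun t : ℝ => q (t • z)) (Icc 0 1)) ∧
    ∀ x : (Fin n → ℂ) × ℝ, ‖x.1 - p.1‖ < r → |x.2 - p.2| < r →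
      ((x ∈ Ω ↔ q (x.1 - p.1) < σ * (x.2 - p.2)) ∧
       (x ∈ closure Ω ↔ q (x.1 - p.1) ≤ σ * (x.2 - p.2)))

lemma isOpen_box (p : (Fin n → ℂ) × ℝ) (r : ℝ) :
    IsOpen {x : (Fin n → ℂ) × ℝ | ‖x.1 - p.1‖ < r ∧ |x.2 - p.2| < r} := by
  have h1 : Continuous (fun x : (Fin n → ℂ) × ℝ => ‖x.1 - p.1‖) := by fun_prop
  have h2 : Continuous (fun x : (Fin n → ℂ) × ℝ => |x.2 - p.2|) := by fun_prop
  exact (isOpen_lt h1 continuous_const).inter (isOpen_lt h2 continuous_const)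

lemma local_structure (hn : 1 ≤ n) {Ω : Set ((Fin n → ℂ) × ℝ)} {p : (Fin n → ℂ) × ℝ}
    (h : NondegElliptic n Ω p) :
    ∃ σ q r, (σ = 1 ∨ σ = -1) ∧ LocGraph n Ω p σ q r := by
  obtain ⟨lam, σ, E, r, hl, hσ, hr, hE, hE0, hE1, hE2, hloc⟩ := h
  obtain ⟨r', hr', hmono⟩ := radial_mono hn lam hl E hE hE1 hE2
  have hσ2 : σ * σ = 1 := by rcases hσ with rfl | rfl <;> norm_num
  have hσa : |σ| = 1 := by rcases hσ with rfl | rfl <;> norm_num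
  have hq : Continuous (fun z => EllipticQ n lam z + E z) := (ellipticQ_cont lam).add hE.continuous
  have hΩ : ∀ x : (Fin n → ℂ) × ℝ, ‖x.1 - p.1‖ < min r r' → |x.2 - p.2| < min r r' →
      (x ∈ Ω ↔ EllipticQ n lam (x.1 - p.1) + E (x.1 - p.1) < σ * (x.2 - p.2)) := by
    intro x h1 h2
    have := hloc (x.1 - p.1) (σ * (x.2 - p.2)) (h1.trans_le (min_le_left _ _))
      (by rw [abs_mul, hσa, one_mul]; exact h2.trans_le (min_le_left _ _))
    rw [← mul_assoc, hσ2] at this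
    simpa using this
  refine ⟨σ, fun z => EllipticQ n lam z + E z, min r r', hσ, lt_min hr hr', hq, ?_, ?_, ?_⟩
  · have := ellipticQ_smul lam 0 0
    simp only [smul_zero] at this
    simp only [hE0, add_zero]
    linarith
  · intro z hz hzr
    exact hmono z hz (hzr.trans_le (min_le_right _ _))
  · intro x h1 h2
    refine ⟨hΩ x h1 h2, ?_, ?_⟩
    · intro hx
      by_contra hlt
      rw [not_le] at hlt
      have ho : IsOpen ({y : (Fin n → ℂ) × ℝ | ‖y.1 - p.1‖ < min r r' ∧ |y.2 - p.2| < min r r'} ∩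
          {y | σ * (y.2 - p.2) < EllipticQ n lam (y.1 - p.1) + E (y.1 - p.1)}) := by
        refine (isOpen_box p _).inter (isOpen_lt (by fun_prop) ?_)
        exact hq.comp (by fun_prop : Continuous fun y : (Fin n → ℂ) × ℝ => y.1 - p.1)
      obtain ⟨y, ⟨⟨hy1, hy2⟩, hy3⟩, hyΩ⟩ := mem_closure_iff.1 hx _ ho ⟨⟨h1, h2⟩, hlt⟩
      exact lt_asymm hy3 ((hΩ y hy1 hy2).1 hyΩ)
    · intro hle
      have hc : Continuous (fun δ : ℝ => ((x.1, x.2 + σ * δ) : (Fin n → ℂ) × ℝ)) := by fun_prop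
      have ht : Tendsto (fun δ : ℝ => ((x.1, x.2 + σ * δ) : (Fin n → ℂ) × ℝ)) (𝓝 0) (𝓝 x) := by
        simpa using hc.tendsto 0
      have ht' := ht.mono_left (nhdsWithin_le_nhds (s := Ioi 0))
      refine mem_closure_of_tendsto ht' ?_
      filter_upwards [ht'.eventually ((isOpen_box p (min r r')).mem_nhds ⟨h1, h2⟩),
        self_mem_nhdsWithin] with δ hδ hδ0
      rw [hΩ (x.1, x.2 + σ * δ) hδ.1 hδ.2]
      have hδ0 : 0 < δ := hδ0
      simp only
      nlinarith

lemma LocGraph.q_pos {Ω : Set ((Fin n → ℂ) × ℝ)} {p : (Fin n → ℂ) × ℝ} {σ q r}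
    (h : LocGraph n Ω p σ q r) {z : Fin n → ℂ} (hz : z ≠ 0) (hzr : ‖z‖ < r) : 0 < q z := by
  have := h.2.2.2.1 z hz hzr (left_mem_Icc.2 zero_le_one) (right_mem_Icc.2 zero_le_one) one_pos
  simpa [h.2.2.1] using this

lemma LocGraph.pos {Ω : Set ((Fin n → ℂ) × ℝ)} {p : (Fin n → ℂ) × ℝ} {σ q r}
    (h : LocGraph n Ω p σ q r) (hσ : σ = 1 ∨ σ = -1) {x : (Fin n → ℂ) × ℝ} (hx : x ∈ closure Ω)
    (h1 : ‖x.1 - p.1‖ < r) (h2 : |x.2 - p.2| < r) (hne : x ≠ p) : 0 < σ * (x.2 - p.2) := by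
  have hle := (h.2.2.2.2 x h1 h2).2.1 hx
  by_cases hz : x.1 - p.1 = 0
  · rw [hz, h.2.2.1] at hle
    refine lt_of_le_of_ne hle ?_
    intro h0
    apply hne
    have : x.2 - p.2 = 0 := by
      rcases hσ with rfl | rfl <;> linarith
    exact Prod.ext (sub_eq_zero.1 hz) (sub_eq_zero.1 this)
  · exact (h.q_pos hz h1).trans_le hle

lemma LocGraph.ev {Ω : Set ((Fin n → ℂ) × ℝ)} {p : (Fin n → ℂ) × ℝ} {σ q r}
    (h : LocGraph n Ω p σ q r) (hσ : σ = 1 ∨ σ = -1) :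
    ∀ᶠ x in 𝓝 p, x ∈ closure Ω → x ≠ p → 0 < σ * (x.2 - p.2) := by
  filter_upwards [(isOpen_box p r).mem_nhds ⟨by simpa using h.1, by simpa using h.1⟩] with x hx hc hne
  exact h.pos hσ hc hx.1 hx.2 hne

lemma no_other (hn : 1 ≤ n) {Ω : Set ((Fin n → ℂ) × ℝ)} (hΩ : IsOpen Ω)
    {p : (Fin n → ℂ) × ℝ} {σ q r}
    (h : LocGraph n Ω p σ q r) (hσ : σ = 1 ∨ σ = -1) {x : (Fin n → ℂ) × ℝ} (hx : x ∈ frontier Ω)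
    (h1 : ‖x.1 - p.1‖ < r) (h2 : |x.2 - p.2| < r) (hne : x ≠ p) : ¬ NondegElliptic n Ω x := by
  intro hE
  have hσ2 : σ * σ = 1 := by rcases hσ with rfl | rfl <;> norm_num
  obtain ⟨σ', q', r', hσ', h'⟩ := local_structure hn hE
  have hpos := h.pos hσ (frontier_subset_closure hx) h1 h2 hne
  have hle := (h.2.2.2.2 x h1 h2).2.1 (frontier_subset_closure hx)
  have hge := mt (h.2.2.2.2 x h1 h2).1.2 (by rw [hΩ.frontier_eq] at hx; exact hx.2)
  have heq : q (x.1 - p.1) = σ * (x.2 - p.2) := le_antisymm hle (not_lt.1 hge)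
  set z := x.1 - p.1 with hz
  have hz0 : z ≠ 0 := by
    intro h0
    rw [h0, h.2.2.1] at heq
    linarith
  have hqc := h.2.1
  have hcont : Continuous (fun t : ℝ => ((p.1 + t • z, p.2 + σ * q (t • z)) : (Fin n → ℂ) × ℝ)) := by
    fun_prop
  have h11 : ((p.1 + (1:ℝ) • z, p.2 + σ * q ((1:ℝ) • z)) : (Fin n → ℂ) × ℝ) = x := by
    rw [one_smul, heq, ← mul_assoc, hσ2, hz]
    ext <;> simp
  have ht := hcont.tendsto 1
  rw [h11] at ht
  have hev : ∀ᶠ t in 𝓝 (1:ℝ), q (t • z) ≠ q z → 0 < σ' * (σ * (q (t • z) - q z)) := by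
    have hb : ∀ᶠ y in 𝓝 x, ‖y.1 - p.1‖ < r ∧ |y.2 - p.2| < r :=
      (isOpen_box p r).mem_nhds ⟨h1, h2⟩
    have e1 := ht.eventually (h'.ev hσ')
    have e2 := ht.eventually hb
    filter_upwards [e1, e2] with t ht1 ht2 hne
    have hcl : ((p.1 + t • z, p.2 + σ * q (t • z)) : (Fin n → ℂ) × ℝ) ∈ closure Ω := by
      refine (h.2.2.2.2 (p.1 + t • z, p.2 + σ * q (t • z)) ht2.1 ht2.2).2.2 ?_
      have e3 : p.1 + t • z - p.1 = t • z := add_sub_cancel_left _ _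
      have e4 : σ * (p.2 + σ * q (t • z) - p.2) = q (t • z) := by
        rw [add_sub_cancel_left, ← mul_assoc, hσ2, one_mul]
      show q (p.1 + t • z - p.1) ≤ σ * (p.2 + σ * q (t • z) - p.2)
      rw [e3, e4]
    have hx2 : x.2 = p.2 + σ * q z := by rw [heq, ← mul_assoc, hσ2]; ring
    have h3 := ht1 hcl (by
      intro he
      have := congrArg Prod.snd he
      rw [hx2] at this
      have h5 : σ * q (t • z) = σ * q z := add_left_cancel this
      have hσ0 : σ ≠ 0 := left_ne_zero_of_mul_eq_one hσ2
      exact hne (mul_left_cancel₀ hσ0 h5))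
    have h6 : σ * (q (t • z) - q z) = (p.2 + σ * q (t • z)) - x.2 := by rw [hx2]; ring
    rw [h6]
    exact h3
  have hlow : ∃ t : ℝ, q (t • z) < q z ∧ 0 < σ' * (σ * (q (t • z) - q z)) := by
    have : ∀ᶠ t in 𝓝[<] (1:ℝ), (0:ℝ) < t ∧ t < 1 := by
      filter_upwards [Ioo_mem_nhdsLT (zero_lt_one' ℝ)] with t ht using ht
    obtain ⟨t, ⟨ht0, ht1⟩, hte⟩ := (this.and (nhdsWithin_le_nhds hev)).exists
    have hm := h.2.2.2.1 z hz0 h1 ⟨ht0.le, ht1.le⟩ (right_mem_Icc.2 zero_le_one) ht1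
    simp only [one_smul] at hm
    exact ⟨t, hm, hte hm.ne⟩
  have hhigh : ∃ t : ℝ, q z < q (t • z) ∧ 0 < σ' * (σ * (q (t • z) - q z)) := by
    have hev2 : ∀ᶠ t in 𝓝 (1:ℝ), ‖t • z‖ < r := by
      have hc : Continuous (fun t : ℝ => ‖t • z‖) := by fun_prop
      exact hc.continuousAt.eventually_lt_const (by simpa using h1)
    obtain ⟨t, ht1, hte, htr⟩ := ((eventually_mem_nhdsWithin : ∀ᶠ t in 𝓝[>] (1:ℝ), t ∈ Ioi (1:ℝ)).and
      (nhdsWithin_le_nhds (hev.and hev2))).exists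
    have ht1 : 1 < t := ht1
    have htpos : 0 < t := by linarith
    have hm := h.2.2.2.1 (t • z) (smul_ne_zero htpos.ne' hz0) htr
      (show t⁻¹ ∈ Icc (0:ℝ) 1 from ⟨by positivity, inv_le_one_of_one_le₀ ht1.le⟩) (right_mem_Icc.2 zero_le_one)
      (inv_lt_one_of_one_lt₀ ht1)
    simp only [one_smul, one_mul, smul_smul, inv_mul_cancel₀ htpos.ne'] at hm
    exact ⟨t, hm, hte hm.ne'⟩
  obtain ⟨t, hta, htb⟩ := hlow
  obtain ⟨u, hua, hub⟩ := hhigh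
  rw [← mul_assoc] at htb hub
  have h7 : σ' * σ < 0 := by
    by_contra hcon
    exact absurd htb (not_lt.2 (mul_nonpos_of_nonneg_of_nonpos (not_lt.1 hcon) (by linarith)))
  exact absurd hub (not_lt.2 (mul_nonpos_of_nonpos_of_nonneg h7.le (by linarith)))

end LocalStructure

section VectorField

variable {n : ℕ}

lemma lin_expand (L : (Fin n → ℂ) × ℝ →L[ℝ] ℝ) (v : Fin n → ℂ) :
    L (v, 0) = ∑ j, ((v j).re * L (Pi.single j 1, 0) + (v j).im * L (Pi.single j Complex.I, 0)) := by
  have hv : ((v, 0) : (Fin n → ℂ) × ℝ) = ∑ j, ((v j).re • ((Pi.single j 1, 0) : (Fin n → ℂ) × ℝ) +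
      (v j).im • ((Pi.single j Complex.I, 0) : (Fin n → ℂ) × ℝ)) := by
    refine Prod.ext ?_ ?_
    · rw [Prod.fst_sum]
      ext k
      simp only [Prod.fst_add, Prod.smul_fst, Finset.sum_apply, Pi.add_apply, Pi.smul_apply]
      rw [Finset.sum_eq_single k]
      · simp
      · intro j _ hj
        simp [Pi.single_eq_of_ne hj.symm]
      · simp
    · rw [Prod.snd_sum]; simp
  rw [hv, map_sum]
  refine Finset.sum_congr rfl fun j _ => ?_
  rw [map_add, map_smul, map_smul, smul_eq_mul, smul_eq_mul]

/-- First partial derivatives. -/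
noncomputable def pa (ρ : ((Fin n → ℂ) × ℝ) → ℝ) (j : Fin n) (p : (Fin n → ℂ) × ℝ) : ℝ :=
  fderiv ℝ ρ p (Pi.single j 1, 0)

/-- Second partial derivatives. -/
noncomputable def pb (ρ : ((Fin n → ℂ) × ℝ) → ℝ) (j : Fin n) (p : (Fin n → ℂ) × ℝ) : ℝ :=
  fderiv ℝ ρ p (Pi.single j Complex.I, 0)

/-- Derivative in the real direction. -/
noncomputable def ps (ρ : ((Fin n → ℂ) × ℝ) → ℝ) (p : (Fin n → ℂ) × ℝ) : ℝ :=
  fderiv ℝ ρ p (0, 1)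

/-- Horizontal gradient. -/
noncomputable def hg (ρ : ((Fin n → ℂ) × ℝ) → ℝ) (p : (Fin n → ℂ) × ℝ) : Fin n → ℂ :=
  fun j => (pa ρ j p : ℂ) + (pb ρ j p : ℂ) * Complex.I

/-- Squared norm of the horizontal gradient. -/
noncomputable def hG (ρ : ((Fin n → ℂ) × ℝ) → ℝ) (p : (Fin n → ℂ) × ℝ) : ℝ :=
  ∑ j, (pa ρ j p ^ 2 + pb ρ j p ^ 2)

/-- The vector field (before the cutoff). -/
noncomputable def vf (ρ : ((Fin n → ℂ) × ℝ) → ℝ) (p : (Fin n → ℂ) × ℝ) : (Fin n → ℂ) × ℝ :=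
  (-(ps ρ p) • hg ρ p, hG ρ p + ρ p ^ 2)

lemma hG_nonneg (ρ : ((Fin n → ℂ) × ℝ) → ℝ) (p : (Fin n → ℂ) × ℝ) : 0 ≤ hG ρ p :=
  Finset.sum_nonneg fun j _ => by positivity

lemma hG_zero {ρ : ((Fin n → ℂ) × ℝ) → ℝ} {p : (Fin n → ℂ) × ℝ} (h : hG ρ p = 0) (j : Fin n) :
    pa ρ j p = 0 ∧ pb ρ j p = 0 := by
  have h1 := (Finset.sum_eq_zero_iff_of_nonneg (fun j _ => by positivity)).1 h j (Finset.mem_univ j)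
  constructor <;> nlinarith [sq_nonneg (pa ρ j p), sq_nonneg (pb ρ j p)]

lemma hG_zero_iff {ρ : ((Fin n → ℂ) × ℝ) → ℝ} {p : (Fin n → ℂ) × ℝ} :
    hG ρ p = 0 ↔ ∀ v : Fin n → ℂ, fderiv ℝ ρ p (v, 0) = 0 := by
  constructor
  · intro h v
    rw [lin_expand]
    refine Finset.sum_eq_zero fun j _ => ?_
    have := hG_zero h j
    unfold pa pb at this
    rw [this.1, this.2]; simp
  · intro h
    unfold hG pa pb
    simp [h]

lemma fderiv_vf (ρ : ((Fin n → ℂ) × ℝ) → ℝ) (p : (Fin n → ℂ) × ℝ) :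
    fderiv ℝ ρ p (vf ρ p) = ps ρ p * ρ p ^ 2 := by
  have h1 : vf ρ p = (-(ps ρ p)) • ((hg ρ p, 0) : (Fin n → ℂ) × ℝ) +
      (hG ρ p + ρ p ^ 2) • ((0, 1) : (Fin n → ℂ) × ℝ) := by
    unfold vf
    ext <;> simp
  have h2 : fderiv ℝ ρ p (hg ρ p, 0) = hG ρ p := by
    rw [lin_expand]
    unfold hG
    refine Finset.sum_congr rfl fun j _ => ?_
    simp only [hg, Complex.add_re, Complex.ofReal_re, Complex.mul_re, Complex.I_re, Complex.I_im,
      Complex.ofReal_im, Complex.add_im, Complex.mul_im]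
    unfold pa pb
    ring
  rw [h1, map_add, map_smul, map_smul, h2]
  have h3 : fderiv ℝ ρ p (0, 1) = ps ρ p := rfl
  rw [h3, smul_eq_mul, smul_eq_mul]
  ring

lemma vf_smooth {ρ : ((Fin n → ℂ) × ℝ) → ℝ} (hρ : ContDiff ℝ (⊤ : ℕ∞) ρ) : ContDiff ℝ 1 (vf ρ) := by
  have hd : ContDiff ℝ 1 (fderiv ℝ ρ) := hρ.fderiv_right (m := 1) (by norm_cast)
  have hw : ∀ w, ContDiff ℝ 1 (fun p => fderiv ℝ ρ p w) := fun w => hd.clm_apply contDiff_const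
  have h1 : ContDiff ℝ 1 ρ := hρ.of_le (by norm_cast)
  have hpa : ∀ j, ContDiff ℝ 1 (pa ρ j) := fun j => hw _
  have hpb : ∀ j, ContDiff ℝ 1 (pb ρ j) := fun j => hw _
  have hps : ContDiff ℝ 1 (ps ρ) := hw _
  have hhg : ContDiff ℝ 1 (hg ρ) := by
    rw [contDiff_pi]
    intro j
    exact (Complex.ofRealCLM.contDiff.comp (hpa j)).add
      ((Complex.ofRealCLM.contDiff.comp (hpb j)).mul contDiff_const)
  have hhG : ContDiff ℝ 1 (hG ρ) := 
    ContDiff.sum fun j _ => ((hpa j).pow 2).add ((hpb j).pow 2)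
  exact (hps.neg.smul hhg).prodMk (hhG.add (h1.pow 2))

lemma exists_lyap (Ω : Set ((Fin n → ℂ) × ℝ))
    (hΩbdd : Bornology.IsBounded Ω)
    (ρ : ((Fin n → ℂ) × ℝ) → ℝ) (hρsm : ContDiff ℝ (⊤ : ℕ∞) ρ)
    (hρΩ : Ω = {p | ρ p < 0}) (hρbd : frontier Ω = {p | ρ p = 0}) :
    ∃ F : LyapFlow (closure Ω), (∀ x, F.h x = x.1.2) ∧ (∀ x, x ∈ F.C ↔ CRSingular n ρ Ω x.1) ∧
      (∀ t x, (F.φ t x).1 ∈ Ω ↔ x.1 ∈ Ω) := by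
  have hcl : ∀ x, x ∈ closure Ω ↔ ρ x ≤ 0 := by
    intro x
    rw [closure_eq_self_union_frontier, hρbd, mem_union, le_iff_lt_or_eq]
    simp only [hρΩ, mem_ofPred_eq]
  have hmem : ∀ x, x ∈ Ω ↔ ρ x < 0 := by intro x; rw [hρΩ]; rfl
  obtain ⟨R, hR0, hR⟩ := hΩbdd.closure.subset_closedBall_lt 0 (0 : (Fin n → ℂ) × ℝ)
  let χ : ContDiffBump (0 : (Fin n → ℂ) × ℝ) := ⟨R, R + 1, hR0, by linarith⟩
  have hχ1 : ∀ x ∈ closure Ω, χ x = 1 := fun x hx => χ.one_of_mem_closedBall (hR hx)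
  let V : (Fin n → ℂ) × ℝ → (Fin n → ℂ) × ℝ := fun p => χ p • vf ρ p
  have hVs : ContDiff ℝ 1 V := χ.contDiff.smul (vf_smooth hρsm)
  have hVc : HasCompactSupport V := χ.hasCompactSupport.smul_right
  obtain ⟨K, hK⟩ := ContDiff.lipschitzWith_of_hasCompactSupport hVc hVs (by norm_num)
  obtain ⟨M, hM⟩ := hVc.exists_bound_of_continuous hVs.continuous
  obtain ⟨φ, hφc, hφ0, hφa, hφd⟩ := exists_flow V K hK M.toNNReal
    (fun x => (hM x).trans (Real.le_coe_toNNReal M))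
  have hfix : ∀ x, V x = 0 → ∀ t, φ t x = x := by
    intro x hx t
    have h1 : ∀ t, HasDerivAt (fun _ : ℝ => x) (V ((fun _ : ℝ => x) t)) t := by
      intro t; simp only [hx]; exact hasDerivAt_const t x
    have := gron_abs V K hK (hφd x) h1 t
    simp only [hφ0, dist_self, zero_mul] at this
    exact dist_le_zero.1 this
  have hsign : ∀ x t, ∃ c > 0, ρ (φ t x) = ρ x * c := by
    intro x t
    have hct : Continuous (fun t => φ t x) := hφc.comp (continuous_id.prodMk continuous_const)
    have hpsc : Continuous (ps ρ) := (hρsm.continuous_fderiv (by simp)).clm_apply continuous_const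
    have := linear_ode_formula (f := fun t => ρ (φ t x))
      (k := fun t => χ (φ t x) * ps ρ (φ t x) * ρ (φ t x)) ?_ ?_ t
    · rw [hφ0] at this
      exact ⟨_, Real.exp_pos _, this⟩
    · exact ((χ.continuous.comp hct).mul (hpsc.comp hct)).mul (hρsm.continuous.comp hct)
    · intro t
      have h1 : HasFDerivAt ρ (fderiv ℝ ρ (φ t x)) (φ t x) :=
        (hρsm.differentiable (by simp) _).hasFDerivAt
      have h2 := h1.comp_hasDerivAt t (hφd x t)
      refine h2.congr_deriv ?_
      simp only [V, map_smul, fderiv_vf, smul_eq_mul]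
      ring
  have hinv : ∀ t x, x ∈ closure Ω → φ t x ∈ closure Ω := by
    intro t x hx
    obtain ⟨c, hc, he⟩ := hsign x t
    rw [hcl] at hx ⊢
    rw [he]
    exact mul_nonpos_of_nonpos_of_nonneg hx hc.le
  have hinvΩ : ∀ t x, φ t x ∈ Ω ↔ x ∈ Ω := by
    intro t x
    obtain ⟨c, hc, he⟩ := hsign x t
    rw [hmem, hmem, he]
    constructor
    · intro h
      by_contra h'
      nlinarith [mul_nonneg (not_lt.1 h') hc.le]
    · exact fun h => mul_neg_of_neg_of_pos h hc
  have hVz : ∀ x ∈ closure Ω, (V x).2 = hG ρ x + ρ x ^ 2 := by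
    intro x hx
    simp [V, hχ1 x hx, vf]
  have hV0 : ∀ x ∈ closure Ω, (V x).2 = 0 → V x = 0 := by
    intro x hx h0
    rw [hVz x hx] at h0
    have hg0 : hG ρ x = 0 := by nlinarith [hG_nonneg ρ x, sq_nonneg (ρ x)]
    have hgz : hg ρ x = 0 := by
      ext j
      simp [hg, hG_zero hg0 j]
    simp [V, vf, hgz, h0]
  have hsd : ∀ x t, HasDerivAt (fun t => (φ t x).2) (V (φ t x)).2 t := by
    intro x t
    exact (hφd x t).snd
  refine ⟨⟨fun t x => ⟨φ t x.1, hinv t x.1 x.2⟩, ?_, fun x => Subtype.ext (hφ0 x.1),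
    fun t u x => Subtype.ext (hφa t u x.1), fun x => x.1.2, by fun_prop, ?_⟩, fun x => rfl, ?_, ?_⟩
  · refine Continuous.subtype_mk ?_ _
    exact hφc.comp (continuous_fst.prodMk (continuous_subtype_val.comp continuous_snd))
  · rintro ⟨x, hx⟩ ⟨t0, ht0⟩
    refine strictMono_of_deriv_pos fun t => ?_
    have h1 := (hsd x t).deriv
    simp only
    rw [h1]
    refine lt_of_le_of_ne ?_ ?_
    · rw [hVz _ (hinv t x hx)]
      have := hG_nonneg ρ (φ t x)
      positivity
    · intro h0
      have h2 := hfix _ (hV0 _ (hinv t x hx) h0.symm)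
      apply ht0
      apply Subtype.ext
      simp only
      have h3 := h2 (-t)
      rw [← hφa, neg_add_cancel, hφ0] at h3
      have h4 := h2 t0
      rw [← h3] at h4
      exact h4
  · rintro ⟨x, hx⟩
    constructor
    · intro h
      have hc : ∀ t, φ t x = x := fun t => congrArg Subtype.val (h t)
      have h1 := hsd x 0
      simp only [hc] at h1
      have h2 : (V x).2 = 0 := h1.unique (hasDerivAt_const 0 x.2)
      rw [hVz x hx] at h2
      have hg0 : hG ρ x = 0 := by nlinarith [hG_nonneg ρ x, sq_nonneg (ρ x)]
      have hr0 : ρ x = 0 := by rw [hg0] at h2; simpa using h2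
      exact ⟨by rw [hρbd]; exact hr0, hG_zero_iff.1 hg0⟩
    · rintro ⟨h1, h2⟩ t
      apply Subtype.ext
      refine hfix x (hV0 x hx ?_) t
      rw [hρbd] at h1
      have h1 : ρ x = 0 := h1
      rw [hVz x hx, h1, hG_zero_iff.2 h2]
      simp
  · intro t x
    exact hinvΩ t x.1

end VectorField

section Cap
variable {n : ℕ}

lemma exists_cap {Ω : Set ((Fin n → ℂ) × ℝ)} (hΩ : IsOpen Ω) (hc : IsCompact (closure Ω))
    {p : (Fin n → ℂ) × ℝ} {q r} (h : LocGraph n Ω p 1 q r)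
    (hmin : ∀ x ∈ closure Ω, x ≠ p → p.2 < x.2) {b : ℝ} (hb : p.2 < b) :
    ∃ c, p.2 < c ∧ c < b ∧ IsConnected {z | (z, c) ∈ Ω} ∧
      (∀ z, (z, c) ∈ frontier Ω → z ∈ closure {z | (z, c) ∈ Ω}) ∧
      (p.1, c) ∉ frontier Ω ∧
      (∀ v : Fin n → ℂ, v ≠ 0 → ∃ t : ℝ, 0 < t ∧ (p.1 + t • v, c) ∈ frontier Ω) ∧
      (∀ (v : Fin n → ℂ) (t u : ℝ), v ≠ 0 → 0 < t → 0 < u → (p.1 + t • v, c) ∈ frontier Ω →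
        (p.1 + u • v, c) ∈ frontier Ω → t = u) := by
  obtain ⟨hr, hqc, hq0, hmono, hloc⟩ := h
  let K : Set ((Fin n → ℂ) × ℝ) := closure Ω ∩ {x | r / 2 ≤ ‖x.1 - p.1‖}
  have hK : IsCompact K := hc.inter_right (isClosed_le continuous_const (by fun_prop))
  obtain ⟨m, hm, hmK⟩ : ∃ m, p.2 < m ∧ ∀ x ∈ K, m ≤ x.2 := by
    rcases K.eq_empty_or_nonempty with h0 | h0
    · exact ⟨p.2 + 1, by linarith, by simp [h0]⟩
    · obtain ⟨x0, hx0, hx0'⟩ := hK.exists_isMinOn h0 continuous_snd.continuousOn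
      refine ⟨x0.2, hmin x0 hx0.1 ?_, fun x hx => hx0' hx⟩
      rintro rfl
      have := hx0.2
      simp at this
      linarith
  obtain ⟨c, hpc, hcm⟩ := exists_between (show p.2 < min m (min (p.2 + r) b) from
    lt_min hm (lt_min (by linarith) hb))
  obtain ⟨hcm, hcr, hcb⟩ : c < m ∧ c < p.2 + r ∧ c < b := by
    rw [lt_min_iff, lt_min_iff] at hcm; exact hcm
  have hsmall : ∀ z, (z, c) ∈ closure Ω → ‖z - p.1‖ < r / 2 := by
    intro z hz
    by_contra hh
    have := hmK (z, c) ⟨hz, not_lt.1 hh⟩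
    simp at this
    linarith
  have hcabs : |c - p.2| < r := by rw [abs_lt]; constructor <;> linarith
  have hin : ∀ w, ‖w‖ < r → ((p.1 + w, c) ∈ Ω ↔ q w < c - p.2) := by
    intro w hw
    have := (hloc (p.1 + w, c) (by simpa using hw) hcabs).1
    simpa using this
  have hcl : ∀ w, ‖w‖ < r → ((p.1 + w, c) ∈ closure Ω ↔ q w ≤ c - p.2) := by
    intro w hw
    have := (hloc (p.1 + w, c) (by simpa using hw) hcabs).2
    simpa using this
  have hfr : ∀ w, ‖w‖ < r → ((p.1 + w, c) ∈ frontier Ω ↔ q w = c - p.2) := by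
    intro w hw
    rw [frontier, hΩ.interior_eq, mem_diff, hin w hw, hcl w hw]
    constructor
    · rintro ⟨h1, h2⟩; linarith
    · intro h; constructor <;> linarith
  have hsmall' : ∀ w, (p.1 + w, c) ∈ closure Ω → ‖w‖ < r / 2 := by
    intro w hw
    simpa using hsmall _ hw
  have hp0 : (p.1, c) ∈ Ω := by
    have := (hin 0 (by simpa using hr)).2 (by rw [hq0]; linarith)
    simpa using this
  have hstar : ∀ w, (p.1 + w, c) ∈ closure Ω → ∀ t : ℝ, 0 ≤ t → t < 1 → (p.1 + t • w, c) ∈ Ω := by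
    intro w hw t ht0 ht1
    by_cases hw0 : w = 0
    · simpa [hw0] using hp0
    have hwr := hsmall' w hw
    have h1 := (hcl w (by linarith)).1 hw
    have h2 := hmono w hw0 (by linarith) ⟨ht0, ht1.le⟩ ⟨zero_le_one, le_rfl⟩ ht1
    simp only [one_smul] at h2
    refine (hin _ ?_).2 (by linarith)
    rw [norm_smul, Real.norm_of_nonneg ht0]
    nlinarith [norm_nonneg w]
  have hclo : ∀ w, (p.1 + w, c) ∈ closure Ω → p.1 + w ∈ closure {z | (z, c) ∈ Ω} := by
    intro w hw
    have ht : Tendsto (fun t : ℝ => p.1 + t • w) (𝓝[<] 1) (𝓝 (p.1 + w)) := by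
      have : Continuous (fun t : ℝ => p.1 + t • w) := by fun_prop
      have := (this.tendsto 1).mono_left (nhdsWithin_le_nhds (s := Iio 1))
      simpa using this
    refine mem_closure_of_tendsto ht ?_
    filter_upwards [self_mem_nhdsWithin, nhdsWithin_le_nhds (lt_mem_nhds (zero_lt_one' ℝ))] with t h1 h0
    exact hstar w hw t h0.le h1
  have hz : ∀ z : Fin n → ℂ, z = p.1 + (z - p.1) := fun z => by abel
  refine ⟨c, hpc, hcb, ?_, ?_, ?_, ?_, ?_⟩
  · refine ⟨⟨p.1, hp0⟩, ?_⟩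
    refine isPreconnected_of_forall p.1 ?_
    intro z hzΩ
    refine ⟨segment ℝ p.1 z, ?_, left_mem_segment _ _ _, right_mem_segment _ _ _, 
      (convex_segment _ _).isPreconnected⟩
    rw [segment_eq_image']
    rintro _ ⟨t, ⟨ht0, ht1⟩, rfl⟩
    rcases ht1.lt_or_eq with h1 | rfl
    · exact hstar (z - p.1) (by rw [← hz]; exact subset_closure hzΩ) t ht0 h1
    · simpa using hzΩ
  · intro z hzf
    have := hclo (z - p.1) (by rw [← hz]; exact frontier_subset_closure hzf)
    rwa [← hz] at this
  · intro hh
    rw [frontier, hΩ.interior_eq] at hh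
    exact hh.2 hp0
  · intro v hv
    have hvn : 0 < ‖v‖ := norm_pos_iff.2 hv
    let k : ℝ := r / 2 / ‖v‖
    have hk : 0 < k := by positivity
    have hkn : ‖k • v‖ = r / 2 := by
      rw [norm_smul, Real.norm_of_nonneg hk.le]
      simp only [k]; field_simp
    have hq : c - p.2 < q (k • v) := by
      by_contra hh
      have := hsmall' _ ((hcl (k • v) (by rw [hkn]; linarith)).2 (not_lt.1 hh))
      linarith
    have hcont : ContinuousOn (fun t : ℝ => q (t • v)) (Icc 0 k) := by fun_prop
    obtain ⟨t, ht, hte⟩ := intermediate_value_Icc hk.le hcont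
      (show c - p.2 ∈ Icc _ _ by simp only [zero_smul, hq0]; exact ⟨by linarith, hq.le⟩)
    simp only at hte
    have ht0 : 0 < t := by
      refine lt_of_le_of_ne ht.1 ?_
      rintro rfl
      rw [zero_smul, hq0] at hte
      linarith
    refine ⟨t, ht0, (hfr _ ?_).2 hte⟩
    have : ‖t • v‖ ≤ ‖k • v‖ := by
      rw [norm_smul, norm_smul, Real.norm_of_nonneg hk.le, Real.norm_of_nonneg ht.1]
      exact mul_le_mul_of_nonneg_right ht.2 hvn.le
    linarith
  · have key : ∀ (v : Fin n → ℂ) (t u : ℝ), 0 < t → t < u → (p.1 + t • v, c) ∈ frontier Ω →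
        (p.1 + u • v, c) ∈ frontier Ω → False := by
      intro v t u ht htu h1 h2
      have := hstar (u • v) (frontier_subset_closure h2) (t / u) (div_pos ht (ht.trans htu)).le
        ((div_lt_one (ht.trans htu)).2 htu)
      rw [smul_smul, div_mul_cancel₀ _ (ht.trans htu).ne'] at this
      rw [frontier, hΩ.interior_eq] at h1
      exact h1.2 this
    intro v t u _ ht hu h1 h2
    rcases lt_trichotomy t u with h | h | h
    · exact (key v t u ht h h1 h2).elim
    · exact h
    · exact (key v u t hu h h2 h1).elim

end Cap

section Suspension

/-- A compact space which is fibered like a suspension of a unit sphere is a sphere. -/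
lemma suspension_homeo {Y : Type*} [TopologicalSpace Y] [CompactSpace Y] 
    {E : Type*} [NormedAddCommGroup E] [InnerProductSpace ℝ E]
    (τ : Y → ℝ) (hτ : Continuous τ) (p q : Y) (hp : τ p = -1) (hq : τ q = 1)
    (hpq : ∀ y, y ≠ p → y ≠ q → -1 < τ y ∧ τ y < 1)
    (d : Y → E) (hd : ContinuousOn d ({p, q}ᶜ : Set Y)) (hd1 : ∀ y, y ≠ p → y ≠ q → ‖d y‖ = 1)
    (hinj : ∀ y y', y ≠ p → y ≠ q → y' ≠ p → y' ≠ q → τ y = τ y' → d y = d y' → y = y')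
    (hsurj : ∀ c u, -1 < c → c < 1 → ‖u‖ = 1 → ∃ y, y ≠ p ∧ y ≠ q ∧ τ y = c ∧ d y = u) 
    [T1Space Y] :
    Nonempty (Y ≃ₜ Metric.sphere (0 : WithLp 2 (E × ℝ)) 1) := by
  classical
  let d' : Y → E := fun y => if y = p ∨ y = q then 0 else d y
  have hd' : ∀ y, y ≠ p → y ≠ q → d' y = d y := fun y h1 h2 => by simp [d', h1, h2]
  have hd'1 : ∀ y, ‖d' y‖ ≤ 1 := by
    intro y
    by_cases h1 : y = p
    · simp [d', h1]
    by_cases h2 : y = q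
    · simp [d', h2]
    rw [hd' y h1 h2, hd1 y h1 h2]
  have hdp : d' p = 0 := by simp [d']
  have hdq : d' q = 0 := by simp [d']
  let f : Y → E := fun y => Real.sqrt (1 - τ y ^ 2) • d' y
  have hfc : Continuous f := by
    rw [continuous_iff_continuousAt]
    intro y
    have hs : Continuous (fun y => Real.sqrt (1 - τ y ^ 2)) := by fun_prop
    have hpole : ∀ y, Real.sqrt (1 - τ y ^ 2) = 0 → ContinuousAt f y := by
      intro y hy
      have hfy : f y = 0 := by simp only [f, hy, zero_smul]
      rw [ContinuousAt, hfy]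
      refine squeeze_zero_norm (a := fun y => Real.sqrt (1 - τ y ^ 2)) ?_ ?_
      · intro y
        simp only [f]
        rw [norm_smul, Real.norm_of_nonneg (Real.sqrt_nonneg _)]
        exact mul_le_of_le_one_right (Real.sqrt_nonneg _) (hd'1 y)
      · rw [← hy]; exact hs.tendsto y
    by_cases h1 : y = p
    · apply hpole; rw [h1, hp]; norm_num
    by_cases h2 : y = q
    · apply hpole; rw [h2, hq]; norm_num
    have hopen : IsOpen ({p, q}ᶜ : Set Y) := ((finite_singleton q).insert p).isClosed.isOpen_compl
    have hmem : ({p, q}ᶜ : Set Y) ∈ 𝓝 y := hopen.mem_nhds (by simp [h1, h2])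
    have hc : ContinuousAt d' y := by
      refine (hd.continuousAt hmem).congr ?_
      filter_upwards [hmem] with z hz
      simp only [mem_compl_iff, mem_insert_iff, mem_singleton_iff, not_or] at hz
      exact (hd' z hz.1 hz.2).symm
    exact hs.continuousAt.smul hc
  have hcases : ∀ y, (y = p ∨ y = q) ∨ (y ≠ p ∧ y ≠ q) := by intro y; tauto
  have hnorm : ∀ y, ‖f y‖ ^ 2 + τ y ^ 2 = 1 := by
    intro y
    rcases hcases y with (rfl | rfl) | ⟨h1, h2⟩
    · simp [f, hdp, hp]
    · simp [f, hdq, hq]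
    · have := hpq y h1 h2
      simp only [f]
      rw [norm_smul, hd' y h1 h2, hd1 y h1 h2, Real.norm_of_nonneg (Real.sqrt_nonneg _), mul_one,
        Real.sq_sqrt (by nlinarith)]
      ring
  have hmemS : ∀ (u : E) (t : ℝ), WithLp.toLp 2 (u, t) ∈ Metric.sphere (0 : WithLp 2 (E × ℝ)) 1 ↔
      ‖u‖ ^ 2 + t ^ 2 = 1 := by
    intro u t
    rw [mem_sphere_zero_iff_norm]
    have h := WithLp.prod_norm_sq_eq_of_L2 (WithLp.toLp 2 (u, t))
    simp only [Real.norm_eq_abs, sq_abs] at h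
    change _ = ‖u‖ ^ 2 + t ^ 2 at h
    rw [← h]
    constructor
    · intro h; rw [h]; norm_num
    · intro h
      nlinarith [norm_nonneg (WithLp.toLp 2 (u, t))]
  let g : Y → Metric.sphere (0 : WithLp 2 (E × ℝ)) 1 := fun y =>
    ⟨WithLp.toLp 2 (f y, τ y), (hmemS _ _).2 (hnorm y)⟩
  have hg : Continuous g := by
    refine Continuous.subtype_mk ?_ _
    exact (WithLp.prod_continuous_toLp 2 E ℝ).comp (hfc.prodMk hτ)
  have hginj : Function.Injective g := by
    intro y y' h
    have h0 : (f y, τ y) = (f y', τ y') := by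
      have := congrArg Subtype.val h
      exact congrArg WithLp.ofLp this
    have hf : f y = f y' := congrArg Prod.fst h0
    have ht : τ y = τ y' := congrArg Prod.snd h0
    clear h0
    rcases hcases y with (rfl | rfl) | ⟨h1, h2⟩ <;> rcases hcases y' with (rfl | rfl) | ⟨h3, h4⟩
    · rfl
    · linarith
    · linarith [hpq y' h3 h4]
    · linarith
    · rfl
    · linarith [hpq y' h3 h4]
    · linarith [hpq y h1 h2]
    · linarith [hpq y h1 h2]
    · refine hinj y y' h1 h2 h3 h4 ht ?_
      simp only [f] at hf
      rw [hd' y h1 h2, hd' y' h3 h4, ht] at hf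
      refine smul_right_injective E (r := Real.sqrt (1 - τ y' ^ 2)) ?_ hf
      have := hpq y' h3 h4
      exact (Real.sqrt_pos.2 (by nlinarith)).ne'
  have hgsurj : Function.Surjective g := by
    rintro ⟨w, hw⟩
    obtain ⟨u, t⟩ := w
    have h := (hmemS u t).1 hw
    by_cases hu : u = 0
    · have : t = -1 ∨ t = 1 := by
        rw [hu] at h
        simp at h
        tauto
      rcases this with rfl | rfl
      · exact ⟨p, Subtype.ext (by simp [g, f, hdp, hp, hu])⟩
      · exact ⟨q, Subtype.ext (by simp [g, f, hdq, hq, hu])⟩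
    · have hun : 0 < ‖u‖ := norm_pos_iff.2 hu
      obtain ⟨y, h1, h2, h3, h4⟩ := hsurj t (‖u‖⁻¹ • u) (by nlinarith) (by nlinarith)
        (by rw [norm_smul, norm_inv, norm_norm, inv_mul_cancel₀ hun.ne'])
      refine ⟨y, Subtype.ext ?_⟩
      have : Real.sqrt (1 - t ^ 2) = ‖u‖ := by
        rw [← h, add_sub_cancel_right, Real.sqrt_sq hun.le]
      simp only [g, f, hd' y h1 h2, h3, h4, this, smul_smul, mul_inv_cancel₀ hun.ne', one_smul]
  exact ⟨Continuous.homeoOfEquivCompactToT2 (f := Equiv.ofBijective g ⟨hginj, hgsurj⟩) hg⟩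

end Suspension

section Assemble
variable {n : ℕ}

lemma exists_dir {M : Set (Fin n → ℂ)} {p : Fin n → ℂ} (hp : p ∉ M)
    (hex : ∀ v : Fin n → ℂ, v ≠ 0 → ∃ t : ℝ, 0 < t ∧ p + t • v ∈ M)
    (huniq : ∀ (v : Fin n → ℂ) (t u : ℝ), v ≠ 0 → 0 < t → 0 < u → p + t • v ∈ M →
        p + u • v ∈ M → t = u) :
    ∃ d : (Fin n → ℂ) → EuclideanSpace ℝ (Fin (2 * n)), ContinuousOn d {p}ᶜ ∧
      (∀ z, z ≠ p → ‖d z‖ = 1) ∧ InjOn d M ∧ ∀ u, ‖u‖ = 1 → ∃ z ∈ M, d z = u := by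
  have hfr : Module.finrank ℝ (Fin n → ℂ) = Module.finrank ℝ (EuclideanSpace ℝ (Fin (2 * n))) := by
    rw [Module.finrank_pi_fintype]
    simp [Complex.finrank_real_complex, mul_comm]
  let L : (Fin n → ℂ) ≃L[ℝ] EuclideanSpace ℝ (Fin (2 * n)) := ContinuousLinearEquiv.ofFinrankEq hfr
  have hL : ∀ z, z ≠ p → 0 < ‖L (z - p)‖ := by
    intro z hz
    rw [norm_pos_iff]
    simpa [sub_eq_zero] using hz
  refine ⟨fun z => ‖L (z - p)‖⁻¹ • L (z - p), ?_, ?_, ?_, ?_⟩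
  · have hc : Continuous (fun z => L (z - p)) := L.continuous.comp (by fun_prop)
    refine ContinuousOn.smul (ContinuousOn.inv₀ hc.norm.continuousOn ?_) hc.continuousOn
    intro z hz
    exact (hL z hz).ne'
  · intro z hz
    rw [norm_smul, norm_inv, norm_norm, inv_mul_cancel₀ (hL z hz).ne']
  · intro z hz z' hz' he
    have h1 : z ≠ p := fun h => hp (h ▸ hz)
    have h2 : z' ≠ p := fun h => hp (h ▸ hz')
    have h3 := hL z h1
    have h4 := hL z' h2
    simp only at he
    have h5 : L (z' - p) = L ((‖L (z' - p)‖ * ‖L (z - p)‖⁻¹) • (z - p)) := by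
      rw [map_smul, mul_smul, he, smul_smul, mul_inv_cancel₀ h4.ne', one_smul]
    have h6 := L.injective h5
    have h7 := huniq (z - p) 1 (‖L (z' - p)‖ * ‖L (z - p)‖⁻¹) (sub_ne_zero.2 h1) one_pos
      (by positivity) (by simpa using hz) (by rw [← h6]; simpa using hz')
    rw [← h7, one_smul] at h6
    exact (sub_left_injective h6).symm
  · intro u hu
    have hu0 : u ≠ 0 := by rintro rfl; simp at hu
    obtain ⟨t, ht, hm⟩ := hex (L.symm u) (by simpa using hu0)
    refine ⟨_, hm, ?_⟩
    simp only [add_sub_cancel_left, map_smul, ContinuousLinearEquiv.apply_symm_apply]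
    rw [norm_smul, hu, Real.norm_of_nonneg ht.le, mul_one, smul_smul, inv_mul_cancel₀ ht.ne', one_smul]

lemma main_data (hn : 1 ≤ n) (Ω : Set ((Fin n → ℂ) × ℝ))
    (hΩopen : IsOpen Ω) (hΩbdd : Bornology.IsBounded Ω)
    (hΩconn : IsConnected Ω)
    (ρ : ((Fin n → ℂ) × ℝ) → ℝ) (hρsm : ContDiff ℝ (⊤ : ℕ∞) ρ)
    (hρΩ : Ω = {p | ρ p < 0}) (hρbd : frontier Ω = {p | ρ p = 0})
    (hsing : ∀ p, CRSingular n ρ Ω p → NondegElliptic n Ω p) :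
    ∃ (F : LyapFlow (closure Ω)) (p q : closure Ω) (c : ℝ),
      (∀ x, F.h x = x.1.2) ∧ (∀ x, x ∈ F.C ↔ CRSingular n ρ Ω x.1) ∧
      (∀ t x, (F.φ t x).1 ∈ Ω ↔ x.1 ∈ Ω) ∧ p ≠ q ∧ F.C = {p, q} ∧
      (∀ x ∉ F.C, F.h p < F.h x ∧ F.h x < F.h q) ∧
      (∀ x ∉ F.C, Tendsto (fun t => F.h (F.φ t x)) atTop (𝓝 (F.h q))) ∧
      (∀ x ∉ F.C, Tendsto (fun t => F.h (F.φ t x)) atBot (𝓝 (F.h p))) ∧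
      F.h p < c ∧ c < F.h q ∧ IsConnected {z | (z, c) ∈ Ω} ∧
      (∀ z, (z, c) ∈ frontier Ω → z ∈ closure {z | (z, c) ∈ Ω}) ∧
      ∃ d : (Fin n → ℂ) → EuclideanSpace ℝ (Fin (2 * n)), 
        ContinuousOn d {z | (z, c) ∈ frontier Ω} ∧
        (∀ z ∈ {z | (z, c) ∈ frontier Ω}, ‖d z‖ = 1) ∧ InjOn d {z | (z, c) ∈ frontier Ω} ∧ 
        ∀ u, ‖u‖ = 1 → ∃ z ∈ {z | (z, c) ∈ frontier Ω}, d z = u := by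
  obtain ⟨F, hFh, hFC, hFΩ⟩ := exists_lyap Ω hΩbdd ρ hρsm hρΩ hρbd
  have hcomp : IsCompact (closure Ω) := hΩbdd.isCompact_closure
  haveI : CompactSpace (closure Ω) := isCompact_iff_compactSpace.1 hcomp
  let O : Set (closure Ω) := Subtype.val ⁻¹' Ω
  have himg : Subtype.val '' O = Ω := by
    rw [Subtype.image_preimage_coe, inter_eq_right.2 subset_closure]
  have hO : IsConnected O := by
    obtain ⟨x, hx⟩ := hΩconn.nonempty
    refine ⟨⟨⟨x, subset_closure hx⟩, hx⟩, ?_⟩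
    rw [← Topology.IsInducing.subtypeVal.isPreconnected_image, himg]
    exact hΩconn.isPreconnected
  have hOd : Dense O := by
    rw [Subtype.dense_iff, himg]
  have hOC : ∀ x ∈ O, x ∉ F.C := by
    intro x hx hC
    have h1 := ((hFC x).1 hC).1
    rw [frontier, hΩopen.interior_eq] at h1
    exact h1.2 hx
  have hev : ∀ x ∈ F.C, ∃ σ q r, (σ = 1 ∨ σ = -1) ∧ LocGraph n Ω x.1 σ q r ∧
      ∀ᶠ y in 𝓝[≠] x, 0 < σ * (F.h y - F.h x) ∧ y ∉ F.C := by
    intro x hx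
    obtain ⟨σ, q, r, hσ, hG⟩ := local_structure hn (hsing _ ((hFC x).1 hx))
    refine ⟨σ, q, r, hσ, hG, ?_⟩
    have hb : ∀ᶠ y : closure Ω in 𝓝 x, y.1 ∈ _ := continuous_subtype_val.continuousAt.eventually_mem
      ((isOpen_box x.1 r).mem_nhds ⟨by simpa using hG.1, by simpa using hG.1⟩)
    filter_upwards [self_mem_nhdsWithin, nhdsWithin_le_nhds hb] with y hne hy
    have hne' : y.1 ≠ x.1 := fun h => hne (Subtype.ext h)
    refine ⟨?_, ?_⟩
    · rw [hFh, hFh]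
      exact hG.pos hσ y.2 hy.1 hy.2 hne'
    · intro hC
      have hS := (hFC y).1 hC
      exact no_other hn hΩopen hG hσ hS.1 hy.1 hy.2 hne' (hsing _ hS)
  have hgood : F.Good := by
    intro x hx
    obtain ⟨σ, q, r, hσ, -, he⟩ := hev x hx
    rcases hσ with rfl | rfl
    · right
      filter_upwards [he] with y hy
      exact ⟨by linarith [hy.1], hy.2⟩
    · left
      filter_upwards [he] with y hy
      exact ⟨by linarith [hy.1], hy.2⟩
  obtain ⟨p, q, hpq, hC, hlt, hpe, hbet, htop, hbot⟩ := F.poles hgood hO hOd hOC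
  obtain ⟨σ, Q, r, hσ, hG, he⟩ := hev p (by rw [hC]; simp)
  have hmin : ∀ x ∈ closure Ω, x ≠ p.1 → p.1.2 < x.2 := by
    intro x hx hne
    have hne' : (⟨x, hx⟩ : closure Ω) ≠ p := fun h => hne (congrArg Subtype.val h)
    have h1 : F.h p < F.h ⟨x, hx⟩ := by
      by_cases hxC : (⟨x, hx⟩ : closure Ω) ∈ F.C
      · rw [hC] at hxC
        rcases hxC with h | h
        · exact (hne' h).elim
        · rw [mem_singleton_iff.1 h]; exact hlt
      · exact (hbet _ hxC).1
    rwa [hFh, hFh] at h1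
  have hσ1 : σ = 1 := by
    rcases hσ with h | rfl
    · exact h
    exfalso
    have h1 : ∀ᶠ y in 𝓝[≠] p, y ∉ O := by
      filter_upwards [hpe, he] with y h1 h2
      linarith [h1.1, h2.1]
    have h2 : ∀ᶠ y in 𝓝 p, y ∉ O := by
      rw [eventually_nhdsWithin_iff] at h1
      filter_upwards [h1] with y hy hyO
      refine hy ?_ hyO
      rintro rfl
      exact hOC _ hyO (by rw [hC]; simp)
    exact (mem_closure_iff_frequently.1 (hOd p)) h2
  subst hσ1
  obtain ⟨c, hc1, hc2, hconn, hclo, hpc, hray, huniq⟩ := exists_cap hΩopen hcomp hG hmin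
    (b := F.h q) (by rw [← hFh]; exact hlt)
  obtain ⟨d, hd1, hd2, hd3, hd4⟩ := exists_dir (M := {z | (z, c) ∈ frontier Ω}) (p := p.1.1)
    hpc hray huniq
  have hne : ∀ z ∈ {z | (z, c) ∈ frontier Ω}, z ≠ p.1.1 := by
    rintro z hz rfl
    exact hpc hz
  exact ⟨F, p, q, c, hFh, hFC, hFΩ, hpq, hC, hbet, htop, hbot, by rw [hFh]; exact hc1, hc2, hconn,
    hclo, d, hd1.mono hne, fun z hz => hd2 z (hne z hz), hd3, hd4⟩

end Assemble

namespace LyapFlow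
variable {X : Type*} [TopologicalSpace X]

lemma orbit_eq (F : LyapFlow X) {x : X} (hx : x ∉ F.C) {t u : ℝ}
    (h : F.h (F.φ t x) = F.h (F.φ u x)) : F.φ t x = F.φ u x := by
  have : t = u := (F.mono' hx).injective h
  rw [this]

lemma lev_image (F : LyapFlow X) {a b c c' : ℝ} 
    (h1 : ∀ x ∉ F.C, Tendsto (fun t => F.h (F.φ t x)) atTop (𝓝 b))
    (h2 : ∀ x ∉ F.C, Tendsto (fun t => F.h (F.φ t x)) atBot (𝓝 a)) (hac : a < c) (hcb : c < b)
    (hac' : a < c') (hcb' : c' < b) :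
    ∃ π : X → X, ContinuousOn π F.Cᶜ ∧ (∀ x ∉ F.C, F.h (π x) = c') ∧
      (∀ x ∉ F.C, ∃ t, π x = F.φ t x) ∧
      ∀ S : Set X, (∀ t x, F.φ t x ∈ S ↔ x ∈ S) → (∀ x ∈ S, F.h x = c → x ∉ F.C) →
        (∀ x ∈ S, F.h x = c' → x ∉ F.C) →
        π '' {x | x ∈ S ∧ F.h x = c} = {x | x ∈ S ∧ F.h x = c'} := by
  obtain ⟨T, hT, hTc, -⟩ := F.exists_proj h1 h2 hac' hcb'
  refine ⟨fun x => F.φ (T x) x, ?_, hT, fun x _ => ⟨_, rfl⟩, ?_⟩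
  · exact F.cont.comp_continuousOn (hTc.prodMk continuousOn_id)
  · intro S hS hSc hSc'
    ext y
    constructor
    · rintro ⟨x, ⟨hx, hxc⟩, rfl⟩
      exact ⟨(hS _ _).2 hx, hT x (hSc x hx hxc)⟩
    · rintro ⟨hy, hyc⟩
      have hyC := hSc' y hy hyc
      obtain ⟨t, ht⟩ := F.exists_time (h1 y hyC) (h2 y hyC) hac hcb
      refine ⟨F.φ t y, ⟨(hS _ _).2 hy, ht⟩, ?_⟩
      have h3 : F.h (F.φ (T (F.φ t y) + t) y) = F.h (F.φ 0 y) := by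
        rw [F.add, hT _ (F.not_C hyC t), F.zero, hyc]
      have h4 := F.orbit_eq hyC h3
      rwa [F.add, F.zero] at h4

end LyapFlow

section Final
variable {n : ℕ}

lemma sphere_iso (n : ℕ) : Nonempty (Metric.sphere (0 : WithLp 2 (EuclideanSpace ℝ (Fin (2 * n)) × ℝ)) 1 ≃ₜ
    Metric.sphere (0 : EuclideanSpace ℝ (Fin (2*n+1))) 1) := by
  have hfr : Module.finrank ℝ (WithLp 2 (EuclideanSpace ℝ (Fin (2 * n)) × ℝ)) =
      2 * n + 1 := by
    rw [(WithLp.linearEquiv 2 ℝ (EuclideanSpace ℝ (Fin (2 * n)) × ℝ)).finrank_eq]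
    simp
  let L := ((stdOrthonormalBasis ℝ (WithLp 2 (EuclideanSpace ℝ (Fin (2 * n)) × ℝ))).reindex
    (finCongr hfr)).repr
  exact ⟨L.toHomeomorph.subtype (by intro x; simp)⟩

theorem main_thm (n : ℕ) (hn : 1 ≤ n) (Ω : Set ((Fin n → ℂ) × ℝ))
    (hΩopen : IsOpen Ω) (hΩbdd : Bornology.IsBounded Ω)
    (hΩconn : IsConnected Ω)
    (ρ : ((Fin n → ℂ) × ℝ) → ℝ) (hρsm : ContDiff ℝ (⊤ : ℕ∞) ρ)
    (hρΩ : Ω = {p | ρ p < 0}) (hρbd : frontier Ω = {p | ρ p = 0})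
    (hsing : ∀ p, CRSingular n ρ Ω p → NondegElliptic n Ω p) :
    (∃ p₁ p₂ : (Fin n → ℂ) × ℝ, p₁ ≠ p₂ ∧
      {p | CRSingular n ρ Ω p} = {p₁, p₂}) ∧
    Nonempty (frontier Ω ≃ₜ Metric.sphere (0 : EuclideanSpace ℝ (Fin (2*n+1))) 1) ∧
    (∀ c : ℝ,
      {z : Fin n → ℂ | (z, c) ∈ Ω} = ∅ ∨
      (IsConnected {z : Fin n → ℂ | (z, c) ∈ Ω} ∧
        Bornology.IsBounded {z : Fin n → ℂ | (z, c) ∈ Ω} ∧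
        IsConnected (frontier {z : Fin n → ℂ | (z, c) ∈ Ω}))) := by
  obtain ⟨F, p, q, c₀, hFh, hFC, hFΩ, hpq, hC, hbet, htop, hbot, hc1, hc2, hconn, hclo, d, hdc,
    hd1, hdi, hds⟩ := main_data hn Ω hΩopen hΩbdd hΩconn ρ hρsm hρΩ hρbd hsing
  have hlt : F.h p < F.h q := hc1.trans hc2
  have hcomp : IsCompact (closure Ω) := hΩbdd.isCompact_closure
  have hfrcomp : IsCompact (frontier Ω) := hcomp.of_isClosed_subset isClosed_frontier
    frontier_subset_closure
  have hpC : p ∈ F.C := by rw [hC]; simp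
  have hqC : q ∈ F.C := by rw [hC]; simp
  have hfr : ∀ x : closure Ω, x.1 ∈ frontier Ω ↔ x.1 ∉ Ω := by
    intro x
    rw [frontier, hΩopen.interior_eq]
    exact ⟨fun h => h.2, fun h => ⟨x.2, h⟩⟩
  have hlevC : ∀ x, F.h p < F.h x → F.h x < F.h q → x ∉ F.C := by
    intro x h1 h2 hx
    rw [hC] at hx
    rcases hx with rfl | hx
    · exact lt_irrefl _ h1
    · rw [mem_singleton_iff.1 hx] at h2; exact lt_irrefl _ h2
  have hΩC : ∀ x : closure Ω, x.1 ∈ Ω → x ∉ F.C := by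
    intro x hx hxC
    exact (hfr x).1 ((hFC x).1 hxC).1 hx
  have hFf : ∀ t x, (F.φ t x).1 ∈ frontier Ω ↔ x.1 ∈ frontier Ω := by
    intro t x
    rw [hfr, hfr, hFΩ]
  let S1 : Set (closure Ω) := {x | x.1 ∈ Ω}
  let S2 : Set (closure Ω) := {x | x.1 ∈ frontier Ω}
  have himg1 : ∀ c, {z | (z, c) ∈ Ω} = (fun x : closure Ω => x.1.1) '' {x | x ∈ S1 ∧ F.h x = c} := by
    intro c
    ext z
    constructor
    · intro hz
      exact ⟨⟨(z, c), subset_closure hz⟩, ⟨hz, hFh _⟩, rfl⟩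
    · rintro ⟨x, ⟨hx, hxc⟩, rfl⟩
      rw [hFh] at hxc
      subst hxc
      exact hx
  have himg2 : ∀ c, {z | (z, c) ∈ frontier Ω} =
      (fun x : closure Ω => x.1.1) '' {x | x ∈ S2 ∧ F.h x = c} := by
    intro c
    ext z
    constructor
    · intro hz
      exact ⟨⟨(z, c), frontier_subset_closure hz⟩, ⟨hz, hFh _⟩, rfl⟩
    · rintro ⟨x, ⟨hx, hxc⟩, rfl⟩
      rw [hFh] at hxc
      subst hxc
      exact hx
  have hprojc : Continuous (fun x : closure Ω => x.1.1) := by fun_prop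
  refine ⟨⟨p.1, q.1, fun h => hpq (Subtype.ext h), ?_⟩, ?_, ?_⟩
  · ext x
    simp only [mem_insert_iff, mem_singleton_iff]
    constructor
    · intro hx
      have hx' : CRSingular n ρ Ω x := hx
      have h1 := (hFC ⟨x, frontier_subset_closure hx'.1⟩).2 hx'
      rw [hC] at h1
      rcases h1 with h | h
      · left; exact congrArg Subtype.val h
      · right; exact congrArg Subtype.val (mem_singleton_iff.1 h)
    · rintro (rfl | rfl)
      · exact (hFC p).1 hpC
      · exact (hFC q).1 hqC
  · -- the sphere
    obtain ⟨e⟩ := sphere_iso n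
    obtain ⟨T, hT, hTc, hT0⟩ := F.exists_proj htop hbot hc1 hc2
    have : CompactSpace (frontier Ω) := isCompact_iff_compactSpace.1 hfrcomp
    let ι : frontier Ω → closure Ω := fun y => ⟨y.1, frontier_subset_closure y.2⟩
    have hι : Continuous ι := continuous_subtype_val.subtype_mk _
    let P : frontier Ω := ⟨p.1, ((hFC p).1 hpC).1⟩
    let Q : frontier Ω := ⟨q.1, ((hFC q).1 hqC).1⟩
    have hιC : ∀ y, y ≠ P → y ≠ Q → ι y ∉ F.C := by
      intro y h1 h2 h3
      rw [hC] at h3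
      rcases h3 with h | h
      · have h' : (ι y).1 = p.1 := by rw [h]
        exact h1 (Subtype.ext h')
      · have h' : (ι y).1 = q.1 := by rw [mem_singleton_iff.1 h]
        exact h2 (Subtype.ext h')
    let g : closure Ω → closure Ω := fun x => F.φ (T x) x
    have hgc : ContinuousOn g F.Cᶜ := F.cont.comp_continuousOn (hTc.prodMk continuousOn_id)
    have hba : 0 < F.h q - F.h p := by linarith
    have hgm : ∀ y, y ≠ P → y ≠ Q → ((g (ι y)).1.1, c₀) = (g (ι y)).1 := by
      intro y h1 h2
      have h3 := hT _ (hιC y h1 h2)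
      rw [hFh] at h3
      exact Prod.ext rfl h3.symm
    have hgf : ∀ y, y ≠ P → y ≠ Q → ((g (ι y)).1.1, c₀) ∈ frontier Ω := by
      intro y h1 h2
      rw [hgm y h1 h2]
      exact (hFf _ _).2 y.2
    have hτi : ∀ s t : ℝ, (2 * s - F.h p - F.h q) / (F.h q - F.h p) = t ↔
        s = (t * (F.h q - F.h p) + F.h p + F.h q) / 2 := by
      intro s t
      rw [div_eq_iff hba.ne']
      constructor <;> intro h <;> linarith
    have hres := suspension_homeo (fun y : frontier Ω =>
        (2 * F.h (ι y) - F.h p - F.h q) / (F.h q - F.h p)) ?_ P Q ?_ ?_ ?_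
        (fun y => d (g (ι y)).1.1) ?_ ?_ ?_ ?_
    · exact hres.map fun f => f.trans e
    · have := F.hcont.comp hι
      exact ((continuous_const.mul this).sub continuous_const |>.sub continuous_const).div_const _
    · change (2 * F.h p - F.h p - F.h q) / (F.h q - F.h p) = -1
      rw [hτi]; ring
    · change (2 * F.h q - F.h p - F.h q) / (F.h q - F.h p) = 1
      rw [hτi]; ring
    · intro y h1 h2
      have := hbet _ (hιC y h1 h2)
      constructor
      · rw [lt_div_iff₀ hba]; linarith
      · rw [div_lt_iff₀ hba]; linarith
    · refine hdc.comp (f := fun y => (g (ι y)).1.1) ?_ ?_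
      · refine hprojc.comp_continuousOn (hgc.comp hι.continuousOn ?_)
        intro y hy
        simp only [mem_compl_iff, mem_insert_iff, mem_singleton_iff, not_or] at hy
        exact hιC y hy.1 hy.2
      · intro y hy
        simp only [mem_compl_iff, mem_insert_iff, mem_singleton_iff, not_or] at hy
        exact hgf y hy.1 hy.2
    · intro y h1 h2
      exact hd1 _ (hgf y h1 h2)
    · intro y y' h1 h2 h3 h4 ht hdd
      have h5 := hdi (hgf y h1 h2) (hgf y' h3 h4) hdd
      have h6 : g (ι y) = g (ι y') := by
        apply Subtype.ext
        rw [← hgm y h1 h2, ← hgm y' h3 h4, h5]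
      have h7 : F.h (ι y) = F.h (ι y') := by
        simp only [hτi] at ht
        rw [ht]; field_simp; ring
      have h8 : F.φ (-T (ι y)) (g (ι y)) = ι y := F.neg_cancel _ _
      have h9 : F.φ (-T (ι y')) (g (ι y)) = ι y' := by rw [h6]; exact F.neg_cancel _ _
      have h10 : ι y = ι y' := by
        rw [← h8, ← h9]
        apply F.orbit_eq (F.not_C (hιC y h1 h2) _)
        rw [h8, h9, h7]
      have h11 : (ι y).1 = (ι y').1 := by rw [h10]
      exact Subtype.ext h11
    · intro c u hc1' hc2' hu
      obtain ⟨z, hz, hzu⟩ := hds u hu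
      let w : closure Ω := ⟨(z, c₀), frontier_subset_closure hz⟩
      have hwh : F.h w = c₀ := hFh w
      have hw : w ∉ F.C := hlevC w (by rw [hwh]; exact hc1) (by rw [hwh]; exact hc2)
      obtain ⟨s, hs⟩ := F.exists_time (c := (c * (F.h q - F.h p) + F.h p + F.h q) / 2)
        (htop w hw) (hbot w hw) (by nlinarith) (by nlinarith)
      have hsC := F.not_C hw s
      let y : frontier Ω := ⟨(F.φ s w).1, (hFf s w).2 hz⟩
      have hιy : ι y = F.φ s w := rfl
      refine ⟨y, ?_, ?_, ?_, ?_⟩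
      · intro h
        apply hsC
        have h' : y.1 = P.1 := by rw [h]
        have : F.φ s w = p := Subtype.ext h'
        rw [this]; exact hpC
      · intro h
        apply hsC
        have h' : y.1 = Q.1 := by rw [h]
        have : F.φ s w = q := Subtype.ext h'
        rw [this]; exact hqC
      · simp only [hτi]
        rw [hιy, hs]
      · have h1 : F.φ (T (F.φ s w) + s) w = F.φ 0 w := by
          apply F.orbit_eq hw
          rw [F.add, hT _ hsC, F.zero, hwh]
        have h2 : g (ι y) = w := by
          rw [F.add, F.zero] at h1
          exact h1
        simp only [h2]
        exact hzu
  · intro c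
    rcases eq_empty_or_nonempty {z : Fin n → ℂ | (z, c) ∈ Ω} with h0 | ⟨z₀, hz₀⟩
    · exact Or.inl h0
    right
    have hz₀' : (z₀, c) ∈ Ω := hz₀
    have hc := hbet ⟨(z₀, c), subset_closure hz₀'⟩ (hΩC _ hz₀')
    have hcc : F.h ⟨(z₀, c), subset_closure hz₀'⟩ = c := hFh _
    rw [hcc] at hc
    obtain ⟨π, hπc, hπh, hπt, hπS⟩ := F.lev_image htop hbot hc1 hc2 hc.1 hc.2
    have hC0 : ∀ x, F.h x = c₀ → x ∉ F.C := fun x hx => hlevC x (by rw [hx]; exact hc1)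
      (by rw [hx]; exact hc2)
    have hCc : ∀ x, F.h x = c → x ∉ F.C := fun x hx => hlevC x (by rw [hx]; exact hc.1)
      (by rw [hx]; exact hc.2)
    have hi1 := hπS S1 hFΩ (fun x _ => hC0 x) (fun x _ => hCc x)
    have hi2 := hπS S2 hFf (fun x _ => hC0 x) (fun x _ => hCc x)
    -- lifting a slice to the closure
    have hlift : ∀ A : Set ((Fin n → ℂ) × ℝ), A ⊆ closure Ω → IsConnected {z | (z, c₀) ∈ A} →
        IsConnected {x : closure Ω | x.1 ∈ A ∧ F.h x = c₀} := by
      intro A hA hcon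
      have he : Subtype.val '' {x : closure Ω | x.1 ∈ A ∧ F.h x = c₀} =
          (fun z => (z, c₀)) '' {z | (z, c₀) ∈ A} := by
        ext x
        constructor
        · rintro ⟨x, ⟨hx, hxc⟩, rfl⟩
          rw [hFh] at hxc
          have : (x.1.1, c₀) = x.1 := Prod.ext rfl hxc.symm
          exact ⟨x.1.1, by simpa only [mem_ofPred_eq, this] using hx, this⟩
        · rintro ⟨z, hz, rfl⟩
          exact ⟨⟨(z, c₀), hA hz⟩, ⟨hz, hFh _⟩, rfl⟩
      have h1 := hcon.image (fun z => (z, c₀)) (by fun_prop)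
      rw [← he] at h1
      exact ⟨h1.nonempty.of_image, Topology.IsInducing.subtypeVal.isPreconnected_image.1 h1.2⟩
    have hfrslice : frontier {z : Fin n → ℂ | (z, c) ∈ Ω} = {z | (z, c) ∈ frontier Ω} := by
      have hop : IsOpen {z : Fin n → ℂ | (z, c) ∈ Ω} := hΩopen.preimage (by fun_prop)
      ext z
      constructor
      · intro hz
        rw [frontier, hop.interior_eq] at hz
        rw [mem_ofPred_eq, frontier, hΩopen.interior_eq]
        refine ⟨?_, hz.2⟩
        have hcl : closure {z : Fin n → ℂ | (z, c) ∈ Ω} ⊆ {z | (z, c) ∈ closure Ω} :=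
          closure_minimal (fun z hz => subset_closure hz) (isClosed_closure.preimage (by fun_prop))
        exact hcl hz.1
      · intro hz
        rw [frontier, hop.interior_eq]
        refine ⟨?_, ?_⟩
        · rw [himg2, ← hi2] at hz
          obtain ⟨_, ⟨y, ⟨hy, hyc⟩, rfl⟩, rfl⟩ := hz
          have hy1 : y.1 = (y.1.1, c₀) := by
            rw [hFh] at hyc
            exact Prod.ext rfl hyc
          have hyf : (y.1.1, c₀) ∈ frontier Ω := by rw [← hy1]; exact hy
          have hycl : y ∈ closure {x | x ∈ S1 ∧ F.h x = c₀} := by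
            rw [closure_subtype]
            have h1 : Continuous (fun z : Fin n → ℂ => (z, c₀)) := by fun_prop
            have h2 := image_closure_subset_closure_image h1 ⟨_, hclo _ hyf, rfl⟩
            rw [hy1]
            refine closure_mono ?_ h2
            rintro _ ⟨z, hz, rfl⟩
            exact ⟨⟨(z, c₀), subset_closure hz⟩, ⟨hz, hFh _⟩, rfl⟩
          have h3 : ContinuousWithinAt π {x | x ∈ S1 ∧ F.h x = c₀} y :=
            (hπc y (hC0 y hyc)).mono fun x hx => hC0 x hx.2
          have h4 := h3.mem_closure_image hycl
          rw [hi1] at h4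
          rw [himg1]
          exact image_closure_subset_closure_image hprojc ⟨_, h4, rfl⟩
        · intro hz'
          exact (hfr ⟨(z, c), subset_closure hz'⟩).1 hz hz'
    have hM0 : IsConnected {z | (z, c₀) ∈ frontier Ω} := by
      have hcl : IsClosed {z : Fin n → ℂ | (z, c₀) ∈ frontier Ω} :=
        isClosed_frontier.preimage (by fun_prop)
      have hcM : IsCompact {z : Fin n → ℂ | (z, c₀) ∈ frontier Ω} := by
        refine (hfrcomp.image continuous_fst).of_isClosed_subset hcl ?_
        intro z hz
        exact ⟨(z, c₀), hz, rfl⟩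
      have : CompactSpace {z : Fin n → ℂ | (z, c₀) ∈ frontier Ω} := isCompact_iff_compactSpace.1 hcM
      let k : {z : Fin n → ℂ | (z, c₀) ∈ frontier Ω} →
          Metric.sphere (0 : EuclideanSpace ℝ (Fin (2 * n))) 1 :=
        fun z => ⟨d z.1, mem_sphere_zero_iff_norm.2 (hd1 z.1 z.2)⟩
      have hk : Continuous k := (continuousOn_iff_continuous_restrict.1 hdc).subtype_mk _
      have hkb : Function.Bijective k := by
        constructor
        · intro z z' h
          exact Subtype.ext (hdi z.2 z'.2 (congrArg Subtype.val h))
        · rintro ⟨u, hu⟩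
          obtain ⟨z, hz, hzu⟩ := hds u (mem_sphere_zero_iff_norm.1 hu)
          exact ⟨⟨z, hz⟩, Subtype.ext hzu⟩
      let e : {z : Fin n → ℂ | (z, c₀) ∈ frontier Ω} ≃ₜ
          Metric.sphere (0 : EuclideanSpace ℝ (Fin (2 * n))) 1 :=
        Continuous.homeoOfEquivCompactToT2 (f := Equiv.ofBijective k hkb) hk
      have hsph : IsConnected (Metric.sphere (0 : EuclideanSpace ℝ (Fin (2 * n))) 1) := by
        apply isConnected_sphere _ _ zero_le_one
        rw [← Module.finrank_eq_rank]
        simp only [finrank_euclideanSpace_fin]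
        norm_cast
        omega
      rw [isConnected_iff_connectedSpace] at hsph ⊢
      exact e.symm.surjective.connectedSpace e.symm.continuous
    refine ⟨?_, ?_, ?_⟩
    · rw [himg1, ← hi1]
      refine IsConnected.image (IsConnected.image (hlift Ω subset_closure hconn) _ ?_) _
        hprojc.continuousOn
      exact hπc.mono fun x hx => hC0 x hx.2
    · refine (hΩbdd.image_fst).subset ?_
      intro z hz
      exact ⟨(z, c), hz, rfl⟩
    · rw [hfrslice, himg2, ← hi2]
      refine IsConnected.image (IsConnected.image (hlift _ frontier_subset_closure hM0) _ ?_) _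
        hprojc.continuousOn
      exact hπc.mono fun x hx => hC0 x hx.2

end Final

end Helpers

theorem stmt_16 (n : ℕ) (hn : 1 ≤ n) (Ω : Set ((Fin n → ℂ) × ℝ))
    (hΩopen : IsOpen Ω) (hΩbdd : Bornology.IsBounded Ω)
    (hΩconn : IsConnected Ω)
    (ρ : ((Fin n → ℂ) × ℝ) → ℝ) (hρsm : ContDiff ℝ (⊤ : ℕ∞) ρ)
    (hρΩ : Ω = {p | ρ p < 0}) (hρbd : frontier Ω = {p | ρ p = 0})
    (hρreg : ∀ p ∈ frontier Ω, fderiv ℝ ρ p ≠ 0)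
    (hsing : ∀ p, CRSingular n ρ Ω p → NondegElliptic n Ω p) :
    (∃ p₁ p₂ : (Fin n → ℂ) × ℝ, p₁ ≠ p₂ ∧
      {p | CRSingular n ρ Ω p} = {p₁, p₂}) ∧
    Nonempty (frontier Ω ≃ₜ Metric.sphere (0 : EuclideanSpace ℝ (Fin (2*n+1))) 1) ∧
    (∀ c : ℝ,
      {z : Fin n → ℂ | (z, c) ∈ Ω} = ∅ ∨
      (IsConnected {z : Fin n → ℂ | (z, c) ∈ Ω} ∧
        Bornology.IsBounded {z : Fin n → ℂ | (z, c) ∈ Ω} ∧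
        IsConnected (frontier {z : Fin n → ℂ | (z, c) ∈ Ω}))) := by
  exact main_thm n hn Ω hΩopen hΩbdd hΩconn ρ hρsm hρΩ hρbd hsing
end
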